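/- Let n ≥ 1, let M be a model of PA⁻ + IΣn, and let N be a Σ_{n+1}-elementary cofinal extension of M. Then M satisfies PΣn if and only if N satisfies PΣn. -/

import Mathlib

/- Shared development: first-order arithmetic in the language {0,1,+,·,<},
   the arithmetic hierarchy, fragments of arithmetic, and coded finite
   combinatorics inside models. -/

open FirstOrder Language

namespace ArithFC

/-- Function symbols of the language of arithmetic: 0, 1, +, ·. -/
inductive Func : ℕ → Type
  | zero : Func 0
  | one : Func 0
  | add : Func 2
  | mul : Func 2

/-- Relation symbols of the language of arithmetic: <. -/
inductive Rel : ℕ → Type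
  | lt : Rel 2

/-- The first-order language {0, 1, +, ·, <}. -/
def lang : Language :=
  { Functions := Func, Relations := Rel }

section Instances

variable (M : Type) [lang.Structure M]

instance : Zero M := ⟨Structure.funMap (L := lang) Func.zero ![]⟩
instance : One M := ⟨Structure.funMap (L := lang) Func.one ![]⟩
instance : Add M := ⟨fun x y => Structure.funMap (L := lang) Func.add ![x, y]⟩
instance : Mul M := ⟨fun x y => Structure.funMap (L := lang) Func.mul ![x, y]⟩
instance : LT M := ⟨fun x y => Structure.RelMap (L := lang) Rel.lt ![x, y]⟩
instance : LE M := ⟨fun x y => x < y ∨ x = y⟩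

end Instances

/-- The numeral `n` in a model. -/
def numM (M : Type) [lang.Structure M] : ℕ → M
  | 0 => 0
  | n + 1 => numM M n + 1

/-- `b` is nonstandard (greater than every numeral). -/
def Nonstd {M : Type} [lang.Structure M] (b : M) : Prop := ∀ n : ℕ, numM M n < b

/-- The atomic formula `t < u`. -/
def ltFm {α : Type} {n : ℕ} (t u : lang.Term (α ⊕ Fin n)) : lang.BoundedFormula α n :=
  BoundedFormula.rel (Rel.lt : lang.Relations 2) ![t, u]

/-- Δ₀ formulas: built from atomic formulas by boolean connectives and
bounded universal quantification (this generates, up to logical equivalence,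
the usual class of bounded formulas). -/
inductive IsDelta0 {α : Type} : ∀ n : ℕ, lang.BoundedFormula α n → Prop
  | falsum (n : ℕ) : IsDelta0 n BoundedFormula.falsum
  | equal (n : ℕ) (t u : lang.Term (α ⊕ Fin n)) : IsDelta0 n (BoundedFormula.equal t u)
  | rel (n l : ℕ) (R : lang.Relations l) (ts : Fin l → lang.Term (α ⊕ Fin n)) :
      IsDelta0 n (BoundedFormula.rel R ts)
  | imp (n : ℕ) {φ ψ : lang.BoundedFormula α n} :
      IsDelta0 n φ → IsDelta0 n ψ → IsDelta0 n (φ.imp ψ)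
  | bdAll (n : ℕ) (t : lang.Term (α ⊕ Fin n)) {φ : lang.BoundedFormula α (n + 1)} :
      IsDelta0 (n + 1) φ →
      IsDelta0 n
        (BoundedFormula.all ((ltFm (Term.var (Sum.inr (Fin.last n))) (t.liftAt 1 n)).imp φ))

mutual
  /-- Σ_m formulas. -/
  inductive SigmaFm {α : Type} : ℕ → ∀ n : ℕ, lang.BoundedFormula α n → Prop
    | delta0 (m n : ℕ) {φ : lang.BoundedFormula α n} : IsDelta0 n φ → SigmaFm m n φ
    | ofPi (m n : ℕ) {φ : lang.BoundedFormula α n} : PiFm m n φ → SigmaFm (m + 1) n φ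
    | ex (m n : ℕ) {φ : lang.BoundedFormula α (n + 1)} :
        SigmaFm (m + 1) (n + 1) φ → SigmaFm (m + 1) n φ.ex
  /-- Π_m formulas. -/
  inductive PiFm {α : Type} : ℕ → ∀ n : ℕ, lang.BoundedFormula α n → Prop
    | delta0 (m n : ℕ) {φ : lang.BoundedFormula α n} : IsDelta0 n φ → PiFm m n φ
    | ofSigma (m n : ℕ) {φ : lang.BoundedFormula α n} : SigmaFm m n φ → PiFm (m + 1) n φ
    | all (m n : ℕ) {φ : lang.BoundedFormula α (n + 1)} :
        PiFm (m + 1) (n + 1) φ → PiFm (m + 1) n φ.all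
end

/-- A `k`-ary relation on `M` is Σ_m-definable (with parameters from `M`). -/
def IsSigmaDef (m : ℕ) (M : Type) [lang.Structure M] {k : ℕ} (R : (Fin k → M) → Prop) : Prop :=
  ∃ (p : ℕ) (φ : lang.BoundedFormula (Fin k ⊕ Fin p) 0) (w : Fin p → M),
    SigmaFm m 0 φ ∧ ∀ v : Fin k → M, R v ↔ φ.Realize (Sum.elim v w) finZeroElim

/-- A subset of `M` is Σ_m-definable with parameters. -/
def SigmaDef1 (m : ℕ) (M : Type) [lang.Structure M] (A : Set M) : Prop :=
  IsSigmaDef m M (k := 1) fun v => v 0 ∈ A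

/-- A binary relation on `M` is Σ_m-definable with parameters. -/
def SigmaDef2 (m : ℕ) (M : Type) [lang.Structure M] (R : M → M → Prop) : Prop :=
  IsSigmaDef m M (k := 2) fun v => R (v 0) (v 1)

/-- A ternary relation on `M` is Σ_m-definable with parameters. -/
def SigmaDef3 (m : ℕ) (M : Type) [lang.Structure M] (R : M → M → M → Prop) : Prop :=
  IsSigmaDef m M (k := 3) fun v => R (v 0) (v 1) (v 2)

/-- `M` is a model of PA⁻ (the nonnegative part of a discretely ordered
commutative semiring). -/
structure PAm (M : Type) [lang.Structure M] : Prop where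
  add_assoc : ∀ x y z : M, x + y + z = x + (y + z)
  add_comm : ∀ x y : M, x + y = y + x
  mul_assoc : ∀ x y z : M, x * y * z = x * (y * z)
  mul_comm : ∀ x y : M, x * y = y * x
  ldistrib : ∀ x y z : M, x * (y + z) = x * y + x * z
  add_zero : ∀ x : M, x + 0 = x
  mul_zero : ∀ x : M, x * 0 = 0
  mul_one : ∀ x : M, x * 1 = x
  lt_trans : ∀ x y z : M, x < y → y < z → x < z
  lt_irrefl : ∀ x : M, ¬x < x
  lt_total : ∀ x y : M, x < y ∨ x = y ∨ y < x
  add_lt_add : ∀ x y z : M, x < y → x + z < y + z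
  mul_lt_mul : ∀ x y z : M, x < y → 0 < z → x * z < y * z
  sub_exists : ∀ x y : M, x < y → ∃ z, x + z = y
  zero_lt_one : (0 : M) < 1
  discrete : ∀ x : M, 0 < x → (1 : M) ≤ x
  zero_le : ∀ x : M, (0 : M) ≤ x

/-- `M` satisfies the Σ_m-induction scheme (with parameters). -/
def ISig (m : ℕ) (M : Type) [lang.Structure M] : Prop :=
  ∀ A : Set M, SigmaDef1 m M A → (0 : M) ∈ A → (∀ x, x ∈ A → x + 1 ∈ A) → ∀ x, x ∈ A

/-- `M` satisfies the Σ_m-collection (bounding) scheme (with parameters). -/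
def BSig (m : ℕ) (M : Type) [lang.Structure M] : Prop :=
  ∀ R : M → M → Prop, SigmaDef2 m M R → ∀ a : M,
    (∀ x, x < a → ∃ y, R x y) → ∃ b, ∀ x, x < a → ∃ y, y < b ∧ R x y

section Coding

variable {M : Type} [lang.Structure M]

/-- `z` is the Cantor pair `⟨x, y⟩`: `2z = (x+y)(x+y+1) + 2y`. -/
def IsPairC (z x y : M) : Prop := z + z = (x + y) * (x + y + 1) + (y + y)

/-- Gödel's β-function: `x = a mod ((i+1)·b + 1)`. -/
def BetaC (a b i x : M) : Prop :=
  x < (i + 1) * b + 1 ∧ ∃ q, a = q * ((i + 1) * b + 1) + x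

/-- The sequence coded by `s` (via a Cantor pair of β-function data) has value `x`
at place `i`. -/
def SeqAt (s i x : M) : Prop := ∃ a b, IsPairC s a b ∧ BetaC a b i x

/-- `c` codes the M-finite set `X` of cardinality `card`: `c = ⟨card, s⟩` where `s`
codes the strictly increasing enumeration of `X` of length `card`. -/
def CodesFinset (c : M) (X : Set M) (card : M) : Prop :=
  ∃ s, IsPairC c card s ∧
    (∀ i, i < card → ∃ x, x ∈ X ∧ SeqAt s i x) ∧
    (∀ i j x y, i < j → j < card → SeqAt s i x → SeqAt s j y → x < y) ∧
    (∀ x, x ∈ X ↔ ∃ i, i < card ∧ SeqAt s i x)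

/-- `X` is an M-finite (coded) set. -/
def MFinite (X : Set M) : Prop := ∃ c card : M, CodesFinset c X card

/-- `d` codes an `e`-element subset `D` of `[0, y)`, i.e. an element of `[y]^e`. -/
def CodesTupleIn (d e y : M) (D : Set M) : Prop :=
  CodesFinset d D e ∧ ∀ z ∈ D, z < y

/-- `f` codes a (finite) function defined on all of `[0, a)`. -/
def CodesFunOn (f a : M) : Prop :=
  ∀ x, x < a → (∃ y, SeqAt f x y) ∧ ∀ y y', SeqAt f x y → SeqAt f x y' → y = y'

/-- `X` is an M-coded subset of `[0, a)`. -/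
def MCodedSubset (a : M) (X : Set M) : Prop :=
  MFinite X ∧ ∀ x ∈ X, x < a

end Coding

/-- An `M`-ultrafilter on `a`: an ultrafilter of the Boolean algebra of
M-finite subsets of `[0, a)`. -/
structure MUltra (M : Type) [lang.Structure M] (a : M) where
  sets : Set (Set M)
  mem_coded : ∀ X ∈ sets, MCodedSubset a X
  univ_mem : {x : M | x < a} ∈ sets
  superset_mem : ∀ X Y : Set M, X ∈ sets → MCodedSubset a Y → X ⊆ Y → Y ∈ sets
  inter_mem : ∀ X Y : Set M, X ∈ sets → Y ∈ sets → X ∩ Y ∈ sets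
  empty_not_mem : (∅ : Set M) ∉ sets
  ultra : ∀ X : Set M, MCodedSubset a X → X ∈ sets ∨ {x : M | x < a ∧ x ∉ X} ∈ sets

section Principles

variable (M : Type) [lang.Structure M]

/-- `F` is (the graph of) a Σ_m-definable injection from `[0, y)` into `[0, x)`. -/
def SigmaInjRel (m : ℕ) (F : M → M → Prop) (y x : M) : Prop :=
  SigmaDef2 m M F ∧
    (∀ u, u < y → ∃ v, v < x ∧ F u v) ∧
    (∀ u v v', u < y → F u v → F u v' → v = v') ∧
    (∀ u u' v, u < y → u' < y → F u v → F u' v → u = u')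

/-- There exists a Σ_m-definable injection from `[0, y)` into `[0, x)`. -/
def ExSigmaInj (m : ℕ) (y x : M) : Prop := ∃ F : M → M → Prop, SigmaInjRel M m F y x

/-- There exists a Σ_m-definable injection from all of `M` into `[0, a)`. -/
def SigmaInjWhole (m : ℕ) (a : M) : Prop :=
  ∃ F : M → M → Prop, SigmaDef2 m M F ∧
    (∀ u, ∃ v, v < a ∧ F u v) ∧
    (∀ u v v', F u v → F u v' → v = v') ∧
    (∀ u u' v, F u v → F u' v → u = u')

/-- CARD(Σ_m): no Σ_m-definable multivalued map sends `M` injectively below `a`. -/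
def CARD (m : ℕ) : Prop :=
  ∀ F : M → M → Prop, SigmaDef2 m M F → ∀ a : M,
    (∀ x, ∃ y, y < a ∧ F x y) →
      ∃ x0 x1 y, x0 ≠ x1 ∧ y < a ∧ F x0 y ∧ F x1 y

/-- GPHP(Σ_m): for every `x` there is `y` with no Σ_m-definable injection of
`[0,y)` into `[0,x)`. -/
def GPHP (m : ℕ) : Prop := ∀ x : M, ∃ y : M, ¬ExSigmaInj M m y x

/-- WPHP(Σ_m): for `x > 0` there is no Σ_m-definable injection of `[0,2x)` into `[0,x)`. -/
def WPHP (m : ℕ) : Prop := ∀ x : M, 0 < x → ¬ExSigmaInj M m (x + x) x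

/-- `C` is a Σ_m-definable `k`-coloring of `[y]^e` (acting on codes of
`e`-element subsets of `[0,y)`, independently of the chosen code). -/
def IsColoring (m : ℕ) (e y k : M) (C : M → M → Prop) : Prop :=
  SigmaDef2 m M C ∧
    (∀ d D, CodesTupleIn d e y D → ∃ i, i < k ∧ C d i) ∧
    (∀ d d' D i i', CodesTupleIn d e y D → CodesTupleIn d' e y D → C d i → C d' i' → i = i')

/-- FRT^e_k(Σ_m): every Σ_m-definable `k`-coloring of some `[y]^e` has an
M-finite homogeneous set of cardinality `x`, for every `x`. -/
def FRT (m : ℕ) (e k : M) : Prop :=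
  ∀ x : M, ∃ y : M, ∀ C : M → M → Prop, IsColoring M m e y k C →
    ∃ (c : M) (H : Set M), CodesFinset c H x ∧ (∀ z ∈ H, z < y) ∧
      ∃ i, ∀ d D, CodesFinset d D e → D ⊆ H → C d i

/-- fairFRT^e_k(Σ_m): the homogeneous set is required to be given as the range of a
Σ_m-definable injection from `[0,x)` into `[0,y)`. -/
def FairFRT (m : ℕ) (e k : M) : Prop :=
  ∀ x : M, ∃ y : M, ∀ C : M → M → Prop, IsColoring M m e y k C →
    ∃ H : M → M → Prop, SigmaInjRel M m H x y ∧
      ∃ i, ∀ d D, CodesFinset d D e → (∀ z ∈ D, ∃ u, u < x ∧ H u z) → C d i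

/-- `C` is a Σ_m-definable `k`-coloring of `[0, y)`. -/
def IsColoring1 (m : ℕ) (y k : M) (C : M → M → Prop) : Prop :=
  SigmaDef2 m M C ∧
    (∀ z, z < y → ∃ i, i < k ∧ C z i) ∧
    (∀ z i i', z < y → C z i → C z i' → i = i')

/-- FRT¹_k(Σ_m): every Σ_m-definable `k`-coloring of some `[0,y)` has an M-finite
homogeneous set of cardinality `x`, for every `x`. -/
def FRT1 (m : ℕ) (k : M) : Prop :=
  ∀ x : M, ∃ y : M, ∀ C : M → M → Prop, IsColoring1 M m y k C →
    ∃ (c : M) (H : Set M), CodesFinset c H x ∧ (∀ z ∈ H, z < y) ∧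
      ∃ i, ∀ z ∈ H, C z i

/-- fairFRT¹_k(Σ_m). -/
def FairFRT1 (m : ℕ) (k : M) : Prop :=
  ∀ x : M, ∃ y : M, ∀ C : M → M → Prop, IsColoring1 M m y k C →
    ∃ H : M → M → Prop, SigmaInjRel M m H x y ∧
      ∃ i, ∀ u v, u < x → H u v → C v i

end Principles

section Approx

variable {M : Type} [lang.Structure M]

/-- `f` is (the graph of) a partial function. -/
def IsPartialFun (f : M → M → Prop) : Prop := ∀ x y y', f x y → f x y' → y = y'

/-- `s` codes an approximation to the partial function `f` of length `b`. -/
def IsApprox (f : M → M → Prop) (s b : M) : Prop :=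
  (∀ i, i < b → ∃ v, SeqAt s i v) ∧
    (∀ i u v x y, i + 1 < b → SeqAt s i u → SeqAt s (i + 1) v → x ≤ u → f x y → y ≤ v)

/-- `s` codes a `g`-stretched approximation to the partial function `f` of length `b`. -/
def IsStretchedApprox (f g : M → M → Prop) (s b : M) : Prop :=
  (∀ i, i < b → ∃ v, SeqAt s i v) ∧
    (∀ i u w v x y, i + 1 < b → SeqAt s i u → g u w → SeqAt s (i + 1) v →
      x ≤ w → f x y → y ≤ v)

/-- The eventual (limit) value of `fun s => h s ·` is `x`. -/
def EvLim (h : M → M → Prop) (x : M) : Prop := ∃ s : M, ∀ t, s < t → h t x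

end Approx

/-- PΣ_m: every partial Σ_m-definable function admits approximations of every length. -/
def PSig (m : ℕ) (M : Type) [lang.Structure M] : Prop :=
  ∀ f : M → M → Prop, SigmaDef2 m M f → IsPartialFun f → ∀ b : M, ∃ s, IsApprox f s b

section Extensions

variable (M N : Type) [lang.Structure M] [lang.Structure N]

/-- `g : M → N` is Σ_m-elementary: Σ_m formulas with parameters from `M` transfer. -/
def SigmaElem (m : ℕ) (g : M → N) : Prop :=
  ∀ (p : ℕ) (φ : lang.BoundedFormula (Fin p) 0), SigmaFm m 0 φ →
    ∀ v : Fin p → M, (φ.Realize v finZeroElim ↔ φ.Realize (g ∘ v) finZeroElim)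

/-- The extension `g : M → N` is cofinal. -/
def Cofinal (g : M → N) : Prop := ∀ z : N, ∃ x : M, z ≤ g x

/-- `[0,a]^M = [0,a]^N`: every element of `N` below `g a` comes from `M`. -/
def SameBelow (g : M → N) (a : M) : Prop := ∀ z : N, z ≤ g a → ∃ x : M, g x = z

end Extensions

section Ramsey

variable {M : Type} [lang.Structure M]

/-- `f` is an M-coded `k`-coloring of `[y]^e` (assigning colors to codes of
`e`-subsets of `[0,y)`, independently of the code). -/
def CodedColoring (f e y k : M) : Prop :=
  (∀ d D, CodesTupleIn d e y D → ∃ i, i < k ∧ SeqAt f d i) ∧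
    (∀ d d' D i i', CodesTupleIn d e y D → CodesTupleIn d' e y D →
      SeqAt f d i → SeqAt f d' i' → i = i')

/-- The coded coloring `f` of `[y]^e` has an M-coded homogeneous set of cardinality `x`. -/
def CodedHomog (f e y x : M) : Prop :=
  ∃ (c : M) (H : Set M), CodesFinset c H x ∧ (∀ z ∈ H, z < y) ∧
    ∃ i, ∀ d D, CodesFinset d D e → D ⊆ H → SeqAt f d i

/-- `y = r(x, e, k)`: `y` is the least size guaranteeing coded homogeneous sets of
cardinality `x` for all coded `k`-colorings of `e`-subsets. -/
def IsRamsey (x e k y : M) : Prop :=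
  (∀ f, CodedColoring f e y k → CodedHomog f e y x) ∧
    (∀ y', y' < y → ∃ f, CodedColoring f e y' k ∧ ¬CodedHomog f e y' x)

/-- `y = r^(b)(x, e, k)`: the `b`-th iterate of the Ramsey function inside `M`. -/
def IterRamsey (x e k b y : M) : Prop :=
  ∃ s : M, SeqAt s 0 x ∧ SeqAt s b y ∧ (∀ i, i ≤ b → ∃ u, SeqAt s i u) ∧
    (∀ i u v, i < b → SeqAt s i u → SeqAt s (i + 1) v → IsRamsey u e k v)

end Ramsey

end ArithFC

namespace ArithFC

/-!
Every property in play is expressed by formulas that are uniform over all structures, so that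
elementarity moves it between `M` and `N`. Write `n = k + 1`.

From `N` to `M`: a Σ_{k+1} formula that defines a partial function in `M` still does so in `N`, and
the existence of an approximation of a given length is a Σ_{k+2} statement.

From `M` to `N`: let `f` be defined in `N` by a Σ_{k+1} formula, with a single parameter `e` after
coding. In `M` one can afford to bound the parameters but not to know `e`, so the approximation has
to serve all parameters `p ≤ c` simultaneously, where `e ≤ c` and `c ∈ M` by cofinality. The formula
need not define a partial function for the other parameters; it is replaced by a Σ_{k+1} formula
that always does and that, by IΣ_k in `M`, selects an upper bound of some value. The steps for all
`p ≤ c` are merged into one partial function by coding: an even argument jumps above the codes of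
all relevant pairs `(x, p)`, an odd one decodes its pair. An approximation of doubled length in `M`,
read at odd places, serves all `p ≤ c`. This is a Π_{k+1} statement, so it passes to `N`, and so do
the Π_{k+2} statements saying that the selected bounds are bounds.
-/

/-! ### The arithmetical hierarchy of formulas -/

section Formulas

variable {α β : Type} {m n : ℕ}

/-- The two sides of the arithmetical hierarchy: `sigma` for Σ, `pi` for Π. -/
inductive Polarity
  | sigma
  | pi

namespace Polarity

/-- The opposite side of the hierarchy. -/
def dual : Polarity → Polarity
  | sigma => pi
  | pi => sigma

@[simp]
theorem dual_dual : ∀ Γ : Polarity, Γ.dual.dual = Γ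
  | sigma => rfl
  | pi => rfl

/-- The quantifier under which the side `Γ` is closed: `∃` for Σ, `∀` for Π. -/
def Quant {X : Type} : Polarity → (X → Prop) → Prop
  | sigma, p => ∃ x, p x
  | pi, p => ∀ x, p x

/-- The formula-level counterpart of `Polarity.Quant`. -/
def quantFm : Polarity → lang.BoundedFormula α (n + 1) → lang.BoundedFormula α n
  | sigma, φ => φ.ex
  | pi, φ => φ.all

theorem not_quant {X : Type} (p : X → Prop) :
    ∀ Γ : Polarity, ¬Γ.Quant p ↔ Γ.dual.Quant fun x => ¬p x
  | sigma => not_exists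
  | pi => not_forall

theorem realize_quantFm (φ : lang.BoundedFormula α (n + 1)) {X : Type} [lang.Structure X]
    (v : α → X) (xs : Fin n → X) :
    ∀ Γ : Polarity, (Γ.quantFm φ).Realize v xs ↔ Γ.Quant fun x => φ.Realize v (Fin.snoc xs x)
  | sigma => BoundedFormula.realize_ex
  | pi => BoundedFormula.realize_all

end Polarity

/-- Σ_m formulas (`Γ = sigma`) and Π_m formulas (`Γ = pi`) as a single family, so that facts
holding on both sides of the hierarchy are proved once. -/
inductive LevelFm : Polarity → ℕ → ∀ n : ℕ, lang.BoundedFormula α n → Prop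
  | delta0 {Γ : Polarity} {m n : ℕ} {φ : lang.BoundedFormula α n} :
      IsDelta0 n φ → LevelFm Γ m n φ
  | ofDual {Γ : Polarity} {m n : ℕ} {φ : lang.BoundedFormula α n} :
      LevelFm Γ.dual m n φ → LevelFm Γ (m + 1) n φ
  | quant {Γ : Polarity} {m n : ℕ} {φ : lang.BoundedFormula α (n + 1)} :
      LevelFm Γ (m + 1) (n + 1) φ → LevelFm Γ (m + 1) n (Γ.quantFm φ)

mutual

theorem SigmaFm.levelFm :
    ∀ {m n : ℕ} {φ : lang.BoundedFormula α n}, SigmaFm m n φ → LevelFm .sigma m n φ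
  | _, _, _, .delta0 _ _ h => .delta0 h
  | _, _, _, .ofPi _ _ h => .ofDual h.levelFm
  | _, _, _, .ex _ _ h => .quant h.levelFm

theorem PiFm.levelFm :
    ∀ {m n : ℕ} {φ : lang.BoundedFormula α n}, PiFm m n φ → LevelFm .pi m n φ
  | _, _, _, .delta0 _ _ h => .delta0 h
  | _, _, _, .ofSigma _ _ h => .ofDual h.levelFm
  | _, _, _, .all _ _ h => .quant h.levelFm

end

theorem LevelFm.sigmaFm_or_piFm {Γ : Polarity} {φ : lang.BoundedFormula α n}
    (h : LevelFm Γ m n φ) : (Γ = .sigma ∧ SigmaFm m n φ) ∨ (Γ = .pi ∧ PiFm m n φ) := by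
  induction h with
  | @delta0 Γ m n φ h =>
    cases Γ
    exacts [.inl ⟨rfl, .delta0 m n h⟩, .inr ⟨rfl, .delta0 m n h⟩]
  | @ofDual Γ m n φ _ ih =>
    cases Γ <;> simp only [Polarity.dual, reduceCtorEq, false_and, false_or, or_false, true_and]
      at ih ⊢
    exacts [.ofPi m n ih, .ofSigma m n ih]
  | @quant Γ m n φ _ ih =>
    cases Γ <;> simp only [reduceCtorEq, false_and, false_or, or_false, true_and] at ih ⊢
    exacts [.ex m n ih, .all m n ih]

theorem levelFm_sigma_iff {φ : lang.BoundedFormula α n} :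
    LevelFm .sigma m n φ ↔ SigmaFm m n φ :=
  ⟨fun h => by simpa using h.sigmaFm_or_piFm, SigmaFm.levelFm⟩

theorem realize_ltFm (t u : lang.Term (α ⊕ Fin n)) {X : Type} [lang.Structure X]
    (v : α → X) (xs : Fin n → X) :
    (ltFm t u).Realize v xs ↔ t.realize (Sum.elim v xs) < u.realize (Sum.elim v xs) :=
  BoundedFormula.realize_rel₂

theorem realize_liftAt_snoc (t : lang.Term (α ⊕ Fin n)) {X : Type} [lang.Structure X]
    (v : α → X) (xs : Fin n → X) (x : X) :
    (t.liftAt 1 n).realize (Sum.elim v (Fin.snoc xs x : Fin (n + 1) → X)) =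
      t.realize (Sum.elim v xs) := by
  rw [Term.realize_liftAt]
  congr 1
  funext a
  rcases a with a | i
  · rfl
  · simp only [Function.comp_apply, Sum.map_inr, i.isLt, if_true, Sum.elim_inr]
    exact Fin.snoc_castSucc (α := fun _ => X) x xs i

/-- The extension of a simultaneous substitution under one more bound variable. -/
def liftSubst {n' : ℕ} (σ : α ⊕ Fin n → lang.Term (β ⊕ Fin n')) :
    α ⊕ Fin (n + 1) → lang.Term (β ⊕ Fin (n' + 1)) :=
  Sum.elim (fun a => (σ (Sum.inl a)).liftAt 1 n')
    (Fin.snoc (α := fun _ => lang.Term (β ⊕ Fin (n' + 1)))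
      (fun i => (σ (Sum.inr i)).liftAt 1 n') (Term.var (Sum.inr (Fin.last n'))))

section Substitution

variable {n' : ℕ} (σ : α ⊕ Fin n → lang.Term (β ⊕ Fin n')) {X : Type} [lang.Structure X]
  (v : β → X) (xs : Fin n' → X)

theorem realize_liftSubst_inl (x : X) (a : α) :
    (liftSubst σ (Sum.inl a)).realize (Sum.elim v (Fin.snoc xs x : Fin (n' + 1) → X)) =
      (σ (Sum.inl a)).realize (Sum.elim v xs) :=
  realize_liftAt_snoc _ v xs x

theorem realize_liftSubst_inr (x : X) :
    (fun i => (liftSubst σ (Sum.inr i)).realize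
        (Sum.elim v (Fin.snoc xs x : Fin (n' + 1) → X))) =
      (Fin.snoc (fun i => (σ (Sum.inr i)).realize (Sum.elim v xs)) x : Fin (n + 1) → X) := by
  funext i
  refine Fin.lastCases ?_ (fun i => ?_) i
  · simp [liftSubst]
  · simp [liftSubst, realize_liftAt_snoc]

theorem realize_subst_sum (t : lang.Term (α ⊕ Fin n)) :
    (t.subst σ).realize (Sum.elim v xs) =
      t.realize (Sum.elim (fun a => (σ (Sum.inl a)).realize (Sum.elim v xs))
        fun i => (σ (Sum.inr i)).realize (Sum.elim v xs)) := by
  rw [Term.realize_subst]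
  congr 1
  funext a
  cases a <;> rfl

end Substitution

theorem IsDelta0.exists_subst {φ : lang.BoundedFormula α n} (h : IsDelta0 n φ) :
    ∀ {n' : ℕ} (σ : α ⊕ Fin n → lang.Term (β ⊕ Fin n')),
      ∃ ψ : lang.BoundedFormula β n', IsDelta0 n' ψ ∧
        ∀ (X : Type) [lang.Structure X] (v : β → X) (xs : Fin n' → X),
          ψ.Realize v xs ↔ φ.Realize (fun a => (σ (Sum.inl a)).realize (Sum.elim v xs))
            fun i => (σ (Sum.inr i)).realize (Sum.elim v xs) := by
  induction h with
  | falsum n => exact fun _ => ⟨_, .falsum _, fun X _ v xs => Iff.rfl⟩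
  | equal n t u =>
    intro n' σ
    refine ⟨_, .equal n' (t.subst σ) (u.subst σ), fun X _ v xs => ?_⟩
    simp only [BoundedFormula.Realize, realize_subst_sum]
  | rel n l R ts =>
    intro n' σ
    refine ⟨_, .rel n' l R fun i => (ts i).subst σ, fun X _ v xs => ?_⟩
    simp only [BoundedFormula.Realize, realize_subst_sum]
  | imp n _ _ ih₁ ih₂ =>
    intro n' σ
    obtain ⟨ψ₁, h₁, e₁⟩ := ih₁ σ
    obtain ⟨ψ₂, h₂, e₂⟩ := ih₂ σ
    refine ⟨_, .imp n' h₁ h₂, fun X _ v xs => ?_⟩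
    rw [BoundedFormula.realize_imp, BoundedFormula.realize_imp, e₁, e₂]
  | bdAll n t _ ih =>
    intro n' σ
    obtain ⟨ψ, h, e⟩ := ih (liftSubst σ)
    refine ⟨_, .bdAll n' (t.subst σ) h, fun X _ v xs => ?_⟩
    rw [BoundedFormula.realize_all, BoundedFormula.realize_all]
    refine forall_congr' fun x => ?_
    simp only [BoundedFormula.realize_imp, e, realize_ltFm, realize_liftAt_snoc,
      realize_subst_sum, realize_liftSubst_inl, realize_liftSubst_inr, Term.realize_var,
      Sum.elim_inr, Fin.snoc_last]

namespace LevelFm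

variable {Γ : Polarity} {φ ψ : lang.BoundedFormula α n}

theorem exists_subst (h : LevelFm Γ m n φ) :
    ∀ {n' : ℕ} (σ : α ⊕ Fin n → lang.Term (β ⊕ Fin n')),
      ∃ ψ : lang.BoundedFormula β n', LevelFm Γ m n' ψ ∧
        ∀ (X : Type) [lang.Structure X] (v : β → X) (xs : Fin n' → X),
          ψ.Realize v xs ↔ φ.Realize (fun a => (σ (Sum.inl a)).realize (Sum.elim v xs))
            fun i => (σ (Sum.inr i)).realize (Sum.elim v xs) := by
  induction h with
  | delta0 h =>
    intro n' σ
    obtain ⟨ψ, h, e⟩ := h.exists_subst σ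
    exact ⟨ψ, .delta0 h, e⟩
  | ofDual _ ih =>
    intro n' σ
    obtain ⟨ψ, h, e⟩ := ih σ
    exact ⟨ψ, .ofDual h, e⟩
  | quant _ ih =>
    intro n' σ
    obtain ⟨ψ, h, e⟩ := ih (liftSubst σ)
    refine ⟨_, .quant h, fun X _ v xs => ?_⟩
    simp only [Polarity.realize_quantFm, e, realize_liftSubst_inl, realize_liftSubst_inr]

theorem exists_weaken (h : LevelFm Γ m n φ) :
    ∃ ψ : lang.BoundedFormula α (n + 1), LevelFm Γ m (n + 1) ψ ∧
      ∀ (X : Type) [lang.Structure X] (v : α → X) (xs : Fin n → X) (x : X),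
        ψ.Realize v (Fin.snoc xs x) ↔ φ.Realize v xs := by
  obtain ⟨ψ, hψ, e⟩ := h.exists_subst fun a => (Term.var a).liftAt 1 n
  refine ⟨ψ, hψ, fun X _ v xs x => ?_⟩
  simp only [e, realize_liftAt_snoc, Term.realize_var, Sum.elim_inl, Sum.elim_inr]

theorem exists_not (h : LevelFm Γ m n φ) :
    ∃ ψ, LevelFm Γ.dual m n ψ ∧
      ∀ (X : Type) [lang.Structure X] (v : α → X) (xs : Fin n → X),
        ψ.Realize v xs ↔ ¬φ.Realize v xs := by
  induction h with
  | delta0 h => exact ⟨_, .delta0 (.imp _ h (.falsum _)), fun X _ v xs => Iff.rfl⟩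
  | ofDual _ ih =>
    obtain ⟨ψ, h, e⟩ := ih
    exact ⟨ψ, .ofDual h, e⟩
  | quant _ ih =>
    obtain ⟨ψ, h, e⟩ := ih
    refine ⟨_, .quant h, fun X _ v xs => ?_⟩
    simp only [Polarity.realize_quantFm, Polarity.not_quant, e]

theorem succ (h : LevelFm Γ m n φ) : LevelFm Γ (m + 1) n φ := by
  induction h with
  | delta0 h => exact .delta0 h
  | ofDual _ ih => exact .ofDual ih
  | quant _ ih => exact .quant ih

theorem isDelta0 (h : LevelFm Γ 0 n φ) : IsDelta0 n φ := by
  cases h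
  assumption

theorem succ_induction {motive : ∀ n (φ : lang.BoundedFormula α n), LevelFm Γ (m + 1) n φ → Prop}
    (ofDual : ∀ {n} {φ : lang.BoundedFormula α n} (h : LevelFm Γ.dual m n φ),
      motive n φ (.ofDual h))
    (quant : ∀ {n} {φ : lang.BoundedFormula α (n + 1)} (h : LevelFm Γ (m + 1) (n + 1) φ),
      motive (n + 1) φ h → motive n (Γ.quantFm φ) (.quant h))
    {n : ℕ} {φ : lang.BoundedFormula α n} : ∀ h : LevelFm Γ (m + 1) n φ, motive n φ h := by
  suffices ∀ k (hk : k = m + 1) (h : LevelFm Γ k n φ), motive n φ (hk ▸ h) from this _ rfl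
  intro k hk h
  induction h with
  | delta0 h => exact ofDual (.delta0 h)
  | ofDual h _ =>
    obtain rfl := Nat.succ.inj hk
    exact ofDual h
  | quant h ih =>
    obtain rfl := Nat.succ.inj hk
    exact quant h (ih ofDual quant rfl)

end LevelFm

/-- A binary connective which is Δ₀-expressible and commutes with both quantifiers, such as
`∧` and `∨`. -/
structure PrenexConnective (op : Prop → Prop → Prop) : Prop where
  delta0 : ∀ {α : Type} {n : ℕ} {φ ψ : lang.BoundedFormula α n},
    IsDelta0 n φ → IsDelta0 n ψ → ∃ χ, IsDelta0 n χ ∧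
      ∀ (X : Type) [lang.Structure X] (v : α → X) (xs : Fin n → X),
        χ.Realize v xs ↔ op (φ.Realize v xs) (ψ.Realize v xs)
  quant_left : ∀ (Γ : Polarity) {X : Type} [Nonempty X] (p : X → Prop) (q : Prop),
    op (Γ.Quant p) q ↔ Γ.Quant fun x => op (p x) q
  quant_right : ∀ (Γ : Polarity) {X : Type} [Nonempty X] (p : Prop) (q : X → Prop),
    op p (Γ.Quant q) ↔ Γ.Quant fun x => op p (q x)

theorem prenexConnective_and : PrenexConnective And where
  delta0 hφ hψ := ⟨_, .imp _ (.imp _ hφ (.imp _ hψ (.falsum _))) (.falsum _), fun X _ v xs => by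
    simp only [BoundedFormula.Realize]
    tauto⟩
  quant_left Γ X _ p q := by cases Γ <;> simp [Polarity.Quant, forall_and]
  quant_right Γ X _ p q := by cases Γ <;> simp [Polarity.Quant, forall_and]

theorem prenexConnective_or : PrenexConnective Or where
  delta0 hφ hψ := ⟨_, .imp _ (.imp _ hφ (.falsum _)) hψ, fun X _ v xs => by
    simp only [BoundedFormula.Realize]
    tauto⟩
  quant_left Γ X _ p q := by
    cases Γ <;> simp [Polarity.Quant, exists_or, forall_or_right]
  quant_right Γ X _ p q := by
    cases Γ <;> simp [Polarity.Quant, exists_or, forall_or_left]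

theorem PrenexConnective.exists_levelFm {op : Prop → Prop → Prop} (hop : PrenexConnective op)
    {Γ : Polarity} {φ ψ : lang.BoundedFormula α n} (hφ : LevelFm Γ m n φ)
    (hψ : LevelFm Γ m n ψ) :
    ∃ χ, LevelFm Γ m n χ ∧ ∀ (X : Type) [lang.Structure X] (v : α → X) (xs : Fin n → X),
      χ.Realize v xs ↔ op (φ.Realize v xs) (ψ.Realize v xs) := by
  induction m generalizing Γ n with
  | zero =>
    obtain ⟨χ, h, e⟩ := hop.delta0 hφ.isDelta0 hψ.isDelta0
    exact ⟨χ, .delta0 h, e⟩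
  | succ m ih =>
    induction hφ using LevelFm.succ_induction with
    | @ofDual n φ hφ =>
      induction hψ using LevelFm.succ_induction with
      | ofDual hψ =>
        obtain ⟨χ, h, e⟩ := ih hφ hψ
        exact ⟨χ, .ofDual h, e⟩
      | quant _ ihψ =>
        obtain ⟨φ', hφ', eφ⟩ := hφ.exists_weaken
        obtain ⟨χ, h, e⟩ := ihψ hφ'
        refine ⟨_, .quant h, fun X _ v xs => ?_⟩
        have : Nonempty X := ⟨0⟩
        simp only [Polarity.realize_quantFm, hop.quant_right, e, eφ]
    | quant _ ihφ =>
      obtain ⟨ψ', hψ', eψ⟩ := hψ.exists_weaken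
      obtain ⟨χ, h, e⟩ := ihφ hψ'
      refine ⟨_, .quant h, fun X _ v xs => ?_⟩
      have : Nonempty X := ⟨0⟩
      simp only [Polarity.realize_quantFm, hop.quant_left, e, eψ]

end Formulas

/-! ### Definability over a class of structures -/

/-- A class of structures for the language of arithmetic, such as the models of a theory. -/
abbrev StructureClass := ∀ (X : Type) [lang.Structure X], Prop

/-- A relation in the variables `α`, given simultaneously on all structures. -/
abbrev URel (α : Type) := ∀ (X : Type) [lang.Structure X], (α → X) → Prop

/-- A function of the variables `α`, given simultaneously on all structures. -/
abbrev UFun (α : Type) := ∀ (X : Type) [lang.Structure X], (α → X) → X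

/-- The valuation extending the second argument by the first at the new variable `none`. -/
local infixr:67 " ▹ " => Option.elim'

/-- The functions given by a single term in all structures. -/
def IsTermFun {α : Type} (f : UFun α) : Prop :=
  ∃ t : lang.Term α, ∀ (X : Type) [lang.Structure X] (v : α → X), f X v = t.realize v

/-- Uniform parameter-free definability over the class `K`: a single Σ_m or Π_m formula,
according to `Γ`, defines `R` in every member of `K`. Parameters are extra variables. -/
def Definable (K : StructureClass) (Γ : Polarity) (m : ℕ) {α : Type} (R : URel α) : Prop :=
  ∃ φ : lang.BoundedFormula α 0, LevelFm Γ m 0 φ ∧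
    ∀ (X : Type) [lang.Structure X], K X → ∀ v : α → X, R X v ↔ φ.Realize v finZeroElim

section Definability

variable {α β : Type} {f g : UFun α}

namespace IsTermFun

theorem var (a : α) : IsTermFun fun _ _ v => v a :=
  ⟨Term.var a, fun _ _ _ => rfl⟩

theorem zero : IsTermFun fun X _ (_ : α → X) => (0 : X) :=
  ⟨Constants.term (L := lang) Func.zero, fun _ _ _ => Term.realize_constants.symm⟩

theorem one : IsTermFun fun X _ (_ : α → X) => (1 : X) :=
  ⟨Constants.term (L := lang) Func.one, fun _ _ _ => Term.realize_constants.symm⟩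

theorem add (hf : IsTermFun f) (hg : IsTermFun g) : IsTermFun fun X _ v => f X v + g X v := by
  obtain ⟨t, ht⟩ := hf
  obtain ⟨u, hu⟩ := hg
  refine ⟨Functions.apply₂ (L := lang) Func.add t u, fun X _ v => ?_⟩
  simp only [ht, hu]
  exact Term.realize_functions_apply₂.symm

theorem mul (hf : IsTermFun f) (hg : IsTermFun g) : IsTermFun fun X _ v => f X v * g X v := by
  obtain ⟨t, ht⟩ := hf
  obtain ⟨u, hu⟩ := hg
  refine ⟨Functions.apply₂ (L := lang) Func.mul t u, fun X _ v => ?_⟩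
  simp only [ht, hu]
  exact Term.realize_functions_apply₂.symm

theorem weaken (hf : IsTermFun f) :
    IsTermFun fun X _ (w : Option α → X) => f X fun a => w (some a) := by
  obtain ⟨t, ht⟩ := hf
  exact ⟨t.relabel some, fun X _ w => (ht X _).trans Term.realize_relabel.symm⟩

theorem cons (hf : IsTermFun f) {e : ∀ (X : Type) [lang.Structure X], (α → X) → β → X}
    (he : ∀ b, IsTermFun fun X _ v => e X v b) :
    ∀ c : Option β, IsTermFun fun X _ v => (f X v ▹ e X v) c
  | none => hf
  | some b => he b

end IsTermFun

namespace Definable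

variable {K K' : StructureClass} {Γ Γ' : Polarity} {m m' : ℕ} {R S : URel α}

theorem of_iff (hS : Definable K Γ m S)
    (h : ∀ (X : Type) [lang.Structure X], K X → ∀ v : α → X, R X v ↔ S X v) :
    Definable K Γ m R := by
  obtain ⟨φ, hφ, e⟩ := hS
  exact ⟨φ, hφ, fun X _ hX v => (h X hX v).trans (e X hX v)⟩

theorem mono_class (hR : Definable K Γ m R)
    (h : ∀ (X : Type) [lang.Structure X], K' X → K X) : Definable K' Γ m R := by
  obtain ⟨φ, hφ, e⟩ := hR
  exact ⟨φ, hφ, fun X _ hX => e X (h X hX)⟩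

theorem ofDual (hR : Definable K Γ.dual m R) : Definable K Γ (m + 1) R := by
  obtain ⟨φ, hφ, e⟩ := hR
  exact ⟨φ, .ofDual hφ, e⟩

theorem succ (hR : Definable K Γ m R) : Definable K Γ (m + 1) R := by
  obtain ⟨φ, hφ, e⟩ := hR
  exact ⟨φ, hφ.succ, e⟩

theorem le_level (hR : Definable K Γ m R) (h : m ≤ m') : Definable K Γ m' R :=
  Nat.le_induction hR (fun _ _ ih => ih.succ) m' h

theorem of_zero (hR : Definable K Γ 0 R) : Definable K Γ' m R := by
  obtain ⟨φ, hφ, e⟩ := hR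
  exact ⟨φ, .delta0 hφ.isDelta0, e⟩

theorem not (hR : Definable K Γ.dual m R) : Definable K Γ m fun X _ v => ¬R X v := by
  obtain ⟨φ, hφ, e⟩ := hR
  obtain ⟨ψ, hψ, e'⟩ := hφ.exists_not
  exact ⟨ψ, Γ.dual_dual ▸ hψ, fun X _ hX v => by simp only [e', e X hX]⟩

theorem and (hR : Definable K Γ m R) (hS : Definable K Γ m S) :
    Definable K Γ m fun X _ v => R X v ∧ S X v := by
  obtain ⟨φ, hφ, e⟩ := hR
  obtain ⟨ψ, hψ, e'⟩ := hS
  obtain ⟨χ, hχ, e''⟩ := prenexConnective_and.exists_levelFm hφ hψ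
  exact ⟨χ, hχ, fun X _ hX v => by simp only [e'', e X hX, e' X hX]⟩

theorem or (hR : Definable K Γ m R) (hS : Definable K Γ m S) :
    Definable K Γ m fun X _ v => R X v ∨ S X v := by
  obtain ⟨φ, hφ, e⟩ := hR
  obtain ⟨ψ, hψ, e'⟩ := hS
  obtain ⟨χ, hχ, e''⟩ := prenexConnective_or.exists_levelFm hφ hψ
  exact ⟨χ, hχ, fun X _ hX v => by simp only [e'', e X hX, e' X hX]⟩

theorem imp (hR : Definable K Γ.dual m R) (hS : Definable K Γ m S) :
    Definable K Γ m fun X _ v => R X v → S X v :=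
  (hR.not.or hS).of_iff fun _ _ _ _ => imp_iff_not_or

theorem eq (hf : IsTermFun f) (hg : IsTermFun g) :
    Definable K Γ m fun X _ v => f X v = g X v := by
  obtain ⟨t, ht⟩ := hf
  obtain ⟨u, hu⟩ := hg
  refine ⟨_, .delta0 (.equal 0 (t.relabel Sum.inl) (u.relabel Sum.inl)), fun X _ _ v => ?_⟩
  simp only [BoundedFormula.Realize, Term.realize_relabel, Sum.elim_comp_inl, ht, hu]

theorem lt (hf : IsTermFun f) (hg : IsTermFun g) :
    Definable K Γ m fun X _ v => f X v < g X v := by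
  obtain ⟨t, ht⟩ := hf
  obtain ⟨u, hu⟩ := hg
  refine ⟨ltFm (t.relabel Sum.inl) (u.relabel Sum.inl), .delta0 (.rel _ _ _ _),
    fun X _ _ v => ?_⟩
  simp only [realize_ltFm, Term.realize_relabel, Sum.elim_comp_inl, ht, hu]

theorem le (hf : IsTermFun f) (hg : IsTermFun g) :
    Definable K Γ m fun X _ v => f X v ≤ g X v :=
  (lt hf hg).or (eq hf hg)

theorem comp {S : URel β} (hS : Definable K Γ m S)
    {e : ∀ (X : Type) [lang.Structure X], (α → X) → β → X}
    (he : ∀ b, IsTermFun fun X _ v => e X v b) :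
    Definable K Γ m fun X _ v => S X (e X v) := by
  obtain ⟨φ, hφ, h⟩ := hS
  choose t ht using he
  obtain ⟨ψ, hψ, h'⟩ :=
    hφ.exists_subst (Sum.elim (fun b => (t b).relabel Sum.inl) (finZeroElim : Fin 0 → _))
  refine ⟨ψ, hψ, fun X _ hX v => ?_⟩
  simp only [h', h X hX, Sum.elim_inl, Term.realize_relabel, Sum.elim_comp_inl, ← ht]
  exact iff_of_eq (congrArg _ (Subsingleton.elim _ _))

theorem exists_bind {S : URel (Option α)} (hS : Definable K Γ m S) :
    ∃ ψ : lang.BoundedFormula α 1, LevelFm Γ m 1 ψ ∧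
      ∀ (X : Type) [lang.Structure X], K X → ∀ (v : α → X) (x : X),
        ψ.Realize v (Fin.snoc finZeroElim x) ↔ S X (x ▹ v) := by
  obtain ⟨φ, hφ, e⟩ := hS
  obtain ⟨ψ, hψ, e'⟩ := hφ.exists_subst (Sum.elim
    (fun c => Term.var ((Sum.inr (0 : Fin 1) ▹ Sum.inl) c)) (finZeroElim : Fin 0 → _))
  refine ⟨ψ, hψ, fun X _ hX v x => ?_⟩
  rw [e', e X hX]
  refine iff_of_eq (congrArg₂ _ ?_ (Subsingleton.elim _ _))
  funext c
  cases c <;> rfl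

theorem quant {P : ∀ (X : Type) [lang.Structure X], (α → X) → X → Prop}
    (hP : Definable K Γ (m + 1) fun X _ (w : Option α → X) =>
      P X (fun a => w (some a)) (w none)) :
    Definable K Γ (m + 1) fun X _ v => Γ.Quant (P X v) := by
  obtain ⟨ψ, hψ, e⟩ := hP.exists_bind
  refine ⟨_, .quant hψ, fun X _ hX v => ?_⟩
  simp only [Polarity.realize_quantFm, e X hX, Option.elim'_some, Option.elim'_none]

theorem ex {P : ∀ (X : Type) [lang.Structure X], (α → X) → X → Prop}
    (hP : Definable K .sigma (m + 1) fun X _ (w : Option α → X) =>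
      P X (fun a => w (some a)) (w none)) :
    Definable K .sigma (m + 1) fun X _ v => ∃ x, P X v x :=
  hP.quant

theorem all {P : ∀ (X : Type) [lang.Structure X], (α → X) → X → Prop}
    (hP : Definable K .pi (m + 1) fun X _ (w : Option α → X) =>
      P X (fun a => w (some a)) (w none)) :
    Definable K .pi (m + 1) fun X _ v => ∀ x, P X v x :=
  hP.quant

theorem ball_zero {P : ∀ (X : Type) [lang.Structure X], (α → X) → X → Prop} (hf : IsTermFun f)
    (hP : Definable K Γ 0 fun X _ (w : Option α → X) => P X (fun a => w (some a)) (w none)) :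
    Definable K Γ 0 fun X _ v => ∀ x, x < f X v → P X v x := by
  obtain ⟨ψ, hψ, e⟩ := hP.exists_bind
  obtain ⟨t, ht⟩ := hf
  refine ⟨_, .delta0 (.bdAll 0 (t.relabel Sum.inl) hψ.isDelta0), fun X _ hX v => ?_⟩
  rw [BoundedFormula.realize_all]
  refine forall_congr' fun x => ?_
  rw [BoundedFormula.realize_imp, e X hX, realize_ltFm, realize_liftAt_snoc,
    Term.realize_relabel, Sum.elim_comp_inl, ht]
  rfl

theorem ball_pi {P : ∀ (X : Type) [lang.Structure X], (α → X) → X → Prop} (hf : IsTermFun f)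
    (hP : Definable K .pi m fun X _ (w : Option α → X) => P X (fun a => w (some a)) (w none)) :
    Definable K .pi m fun X _ v => ∀ x, x < f X v → P X v x := by
  cases m with
  | zero => exact ball_zero hf hP
  | succ m => exact all ((lt (.var none) hf.weaken).imp hP)

theorem bex_zero {P : ∀ (X : Type) [lang.Structure X], (α → X) → X → Prop} (hf : IsTermFun f)
    (hP : Definable K Γ 0 fun X _ (w : Option α → X) => P X (fun a => w (some a)) (w none)) :
    Definable K Γ 0 fun X _ v => ∃ x, x < f X v ∧ P X v x :=
  (not (ball_zero (P := fun X _ v x => ¬P X v x) hf (not (of_zero hP)))).of_iff fun _ _ _ _ => by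
    simp only [not_forall, not_not, exists_prop]

theorem of_realize {n : ℕ} {φ : lang.BoundedFormula β n} (hφ : LevelFm Γ m n φ) (e : β → α)
    (d : Fin n → α) : Definable K Γ m fun _ _ v => φ.Realize (v ∘ e) (v ∘ d) := by
  obtain ⟨ψ, hψ, h⟩ := hφ.exists_subst (Sum.elim
    (fun b => Term.var (Sum.inl (e b))) fun i => Term.var (Sum.inl (d i)) :
      _ → lang.Term (α ⊕ Fin 0))
  exact ⟨ψ, hψ, fun X _ _ v => (h X v finZeroElim).symm⟩

theorem succ_induction {motive : ∀ {α : Type} [Finite α], URel α → Prop}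
    (ofDual : ∀ {α : Type} [Finite α] {R : URel α}, Definable K Γ.dual m R → motive R)
    (quant : ∀ {α : Type} [Finite α] {P : ∀ (X : Type) [lang.Structure X], (α → X) → X → Prop},
      motive (fun X _ (w : Option α → X) => P X (fun a => w (some a)) (w none)) →
        motive fun X _ v => Γ.Quant (P X v))
    (of_iff : ∀ {α : Type} [Finite α] {R S : URel α}, motive S →
      (∀ (X : Type) [lang.Structure X], K X → ∀ v : α → X, R X v ↔ S X v) → motive R)
    [Finite α] (hR : Definable K Γ (m + 1) R) : motive R := by
  obtain ⟨φ, hφ, h⟩ := hR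
  suffices ∀ n (φ : lang.BoundedFormula α n), LevelFm Γ (m + 1) n φ →
      ∀ {β : Type} [Finite β] (e : α → β) (d : Fin n → β),
        motive fun X _ v => φ.Realize (v ∘ e) (v ∘ d) from
    of_iff (this 0 φ hφ id finZeroElim) fun X _ hX v => by
      rw [h X hX, Function.comp_id, Subsingleton.elim (v ∘ finZeroElim)]
  intro n φ hφ
  induction hφ using LevelFm.succ_induction with
  | ofDual hφ => exact fun e d => ofDual (of_realize hφ e d)
  | @quant n φ _ ih =>
    intro β _ e d
    refine of_iff (quant (P := fun X _ v x => φ.Realize (v ∘ e) (Fin.snoc (v ∘ d) x)) ?_)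
      fun X _ _ v => Polarity.realize_quantFm ..
    refine of_iff (ih (some ∘ e) (Fin.snoc (some ∘ d) none)) fun X _ _ w => ?_
    rw [Fin.comp_snoc]
    rfl

end Definable

end Definability

/-! ### Transfer along elementary maps -/

/-- The class of all structures. -/
abbrev allStructures : StructureClass := fun _ _ => True

theorem Definable.exists_allStructures {α : Type} {K : StructureClass} {Γ : Polarity} {m : ℕ}
    {R : URel α} (hR : Definable K Γ m R) :
    ∃ S : URel α, Definable allStructures Γ m S ∧
      ∀ (X : Type) [lang.Structure X], K X → ∀ v : α → X, R X v ↔ S X v := by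
  obtain ⟨φ, hφ, e⟩ := hR
  exact ⟨fun X _ v => φ.Realize v finZeroElim, ⟨φ, hφ, fun _ _ _ _ => Iff.rfl⟩, e⟩

section Transfer

variable {M N : Type} [lang.Structure M] [lang.Structure N] {g : M → N} {m n : ℕ} {α : Type}
  [Finite α] {R : URel α}

theorem SigmaElem.iff_sigma (hel : SigmaElem M N n g) (hR : Definable allStructures .sigma n R)
    (v : α → M) : R M v ↔ R N (g ∘ v) := by
  obtain ⟨p, ⟨e⟩⟩ := Finite.exists_equiv_fin α
  obtain ⟨φ, hφ, h⟩ := hR.comp (e := fun X _ (w : Fin p → X) => w ∘ e) fun a => .var (e a)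
  have key := hel p φ (levelFm_sigma_iff.mp hφ) (v ∘ e.symm)
  rw [← h M trivial, ← h N trivial] at key
  simpa only [Function.comp_assoc, Equiv.symm_comp_self, Function.comp_id] using key

theorem SigmaElem.iff {Γ : Polarity} (hel : SigmaElem M N n g)
    (hR : Definable allStructures Γ n R) (v : α → M) : R M v ↔ R N (g ∘ v) := by
  cases Γ with
  | sigma => exact hel.iff_sigma hR v
  | pi => exact not_iff_not.mp (hel.iff_sigma (Definable.not (Γ := .sigma) hR) v)

theorem SigmaElem.forall (hel : SigmaElem M N (n + 1) g)
    (hR : Definable allStructures .pi (n + 1) R) (h : ∀ v, R M v) : ∀ v, R N v := by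
  induction α using Finite.induction_empty_option with
  | of_equiv i ih =>
    have := ih (hR.comp (e := fun X _ w => w ∘ i.symm) fun b => .var (i.symm b)) fun v => h _
    exact fun v => by
      simpa only [Function.comp_assoc, i.self_comp_symm, Function.comp_id] using this (v ∘ i)
  | h_empty =>
    intro v
    rw [Subsingleton.elim v (g ∘ PEmpty.elim), ← hel.iff hR]
    exact h _
  | h_option ih =>
    have hall : Definable allStructures .pi (n + 1) fun X _ w => ∀ x, R X (x ▹ w) :=
      .all (hR.comp (.cons (.var none) fun a => .var (some a)))
    intro v
    simpa only [Option.elim'_none_some] using ih hall (fun w x => h _) (v ∘ some) (v none)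

end Transfer

theorem PAm.transfer {M N : Type} [lang.Structure M] [lang.Structure N] {g : M → N} {k : ℕ}
    (hM : PAm M) (hel : SigmaElem M N (k + 2) g) : PAm N where
  add_assoc x y z := hel.forall (α := Fin 3)
    (.eq (.add (.add (.var 0) (.var 1)) (.var 2)) (.add (.var 0) (.add (.var 1) (.var 2))))
    (fun _ => hM.add_assoc _ _ _) ![x, y, z]
  add_comm x y := hel.forall (α := Fin 2)
    (.eq (.add (.var 0) (.var 1)) (.add (.var 1) (.var 0))) (fun _ => hM.add_comm _ _) ![x, y]
  mul_assoc x y z := hel.forall (α := Fin 3)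
    (.eq (.mul (.mul (.var 0) (.var 1)) (.var 2)) (.mul (.var 0) (.mul (.var 1) (.var 2))))
    (fun _ => hM.mul_assoc _ _ _) ![x, y, z]
  mul_comm x y := hel.forall (α := Fin 2)
    (.eq (.mul (.var 0) (.var 1)) (.mul (.var 1) (.var 0))) (fun _ => hM.mul_comm _ _) ![x, y]
  ldistrib x y z := hel.forall (α := Fin 3)
    (.eq (.mul (.var 0) (.add (.var 1) (.var 2)))
      (.add (.mul (.var 0) (.var 1)) (.mul (.var 0) (.var 2))))
    (fun _ => hM.ldistrib _ _ _) ![x, y, z]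
  add_zero x := hel.forall (α := Fin 1)
    (.eq (.add (.var 0) .zero) (.var 0)) (fun _ => hM.add_zero _) ![x]
  mul_zero x := hel.forall (α := Fin 1)
    (.eq (.mul (.var 0) .zero) .zero) (fun _ => hM.mul_zero _) ![x]
  mul_one x := hel.forall (α := Fin 1)
    (.eq (.mul (.var 0) .one) (.var 0)) (fun _ => hM.mul_one _) ![x]
  lt_trans x y z := hel.forall (α := Fin 3)
    (.imp (.lt (.var 0) (.var 1)) (.imp (.lt (.var 1) (.var 2)) (.lt (.var 0) (.var 2))))
    (fun _ => hM.lt_trans _ _ _) ![x, y, z]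
  lt_irrefl x := hel.forall (α := Fin 1)
    (.not (.lt (.var 0) (.var 0))) (fun _ => hM.lt_irrefl _) ![x]
  lt_total x y := hel.forall (α := Fin 2)
    (.or (.lt (.var 0) (.var 1)) (.or (.eq (.var 0) (.var 1)) (.lt (.var 1) (.var 0))))
    (fun _ => hM.lt_total _ _) ![x, y]
  add_lt_add x y z := hel.forall (α := Fin 3)
    (.imp (.lt (.var 0) (.var 1)) (.lt (.add (.var 0) (.var 2)) (.add (.var 1) (.var 2))))
    (fun _ => hM.add_lt_add _ _ _) ![x, y, z]
  mul_lt_mul x y z := hel.forall (α := Fin 3)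
    (.imp (.lt (.var 0) (.var 1)) (.imp (.lt .zero (.var 2))
      (.lt (.mul (.var 0) (.var 2)) (.mul (.var 1) (.var 2)))))
    (fun _ => hM.mul_lt_mul _ _ _) ![x, y, z]
  sub_exists x y := hel.forall (α := Fin 2)
    (R := fun _ _ v => v 0 < v 1 → ∃ z, v 0 + z = v 1)
    (.imp (.lt (.var 0) (.var 1)) (.ofDual (.ex (.eq (.add (.var _) (.var _)) (.var _)))))
    (fun _ => hM.sub_exists _ _) ![x, y]
  zero_lt_one := hel.forall (α := Fin 0) (.lt .zero .one) (fun _ => hM.zero_lt_one) ![]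
  discrete x := hel.forall (α := Fin 1)
    (.imp (.lt .zero (.var 0)) (.le .one (.var 0))) (fun _ => hM.discrete _) ![x]
  zero_le x := hel.forall (α := Fin 1) (.le .zero (.var 0)) (fun _ => hM.zero_le _) ![x]

/-! ### Arithmetic in models of PA⁻ -/

/-- Twice the Cantor pair of `x` and `y`. -/
def pairPoly {R : Type} [Add R] [Mul R] [One R] (x y : R) : R := (x + y) * (x + y + 1) + (y + y)

section DiscreteSemiring

variable {R : Type} [CommSemiring R] [LinearOrder R] [IsStrictOrderedRing R] {x y x' y' : R}

theorem add_self_injective : Function.Injective fun x : R => x + x :=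
  (strictMono_id.add strictMono_id).injective

theorem pairPoly_le_pairPoly [CanonicallyOrderedAdd R] (hx : x ≤ x') (hy : y ≤ y') :
    pairPoly x y ≤ pairPoly x' y' := by
  unfold pairPoly
  gcongr

variable [SuccAddOrder R]

theorem add_self_ne_add_self_add_one (x y : R) : x + x ≠ y + y + 1 := by
  rcases le_or_gt x y with h | h
  · exact ((add_le_add h h).trans_lt (lt_add_one _)).ne
  · have hyx := Order.add_one_le_of_lt h
    refine ne_of_gt ?_
    calc y + y + 1 < y + y + 1 + 1 := lt_add_one _
      _ = (y + 1) + (y + 1) := by ring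
      _ ≤ x + x := add_le_add hyx hyx

variable [CanonicallyOrderedAdd R]

theorem pairPoly_lt_pairPoly (h : x + y < x' + y') : pairPoly x y < pairPoly x' y' := by
  have hle := Order.add_one_le_of_lt h
  calc pairPoly x y ≤ pairPoly x y + (x + x) := le_self_add
    _ < pairPoly x y + (x + x) + (1 + 1) := lt_add_of_pos_right _ (add_pos one_pos one_pos)
    _ = (x + y + 1) * (x + y + 1 + 1) := by unfold pairPoly; ring
    _ ≤ (x' + y') * (x' + y' + 1) := by gcongr
    _ ≤ pairPoly x' y' := le_self_add

theorem pairPoly_inj : pairPoly x y = pairPoly x' y' ↔ x = x' ∧ y = y' := by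
  refine ⟨fun h => ?_, fun ⟨hx, hy⟩ => hx ▸ hy ▸ rfl⟩
  have hsum : x + y = x' + y' := le_antisymm
    (not_lt.mp fun hlt => (pairPoly_lt_pairPoly hlt).ne h.symm)
    (not_lt.mp fun hlt => (pairPoly_lt_pairPoly hlt).ne h)
  unfold pairPoly at h
  rw [hsum] at h
  obtain rfl := add_self_injective (add_left_cancel h)
  exact ⟨add_right_cancel hsum, rfl⟩

end DiscreteSemiring

section PeanoModel

variable (X : Type) [lang.Structure X] [hX : Fact (PAm X)]

noncomputable instance : CommSemiring X where
  add_assoc := hX.out.add_assoc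
  zero_add x := (hX.out.add_comm 0 x).trans (hX.out.add_zero x)
  add_zero := hX.out.add_zero
  add_comm := hX.out.add_comm
  mul_assoc := hX.out.mul_assoc
  mul_comm := hX.out.mul_comm
  one_mul x := (hX.out.mul_comm 1 x).trans (hX.out.mul_one x)
  mul_one := hX.out.mul_one
  zero_mul x := (hX.out.mul_comm 0 x).trans (hX.out.mul_zero x)
  mul_zero := hX.out.mul_zero
  left_distrib := hX.out.ldistrib
  right_distrib x y z := by
    rw [hX.out.mul_comm, hX.out.ldistrib, hX.out.mul_comm z x, hX.out.mul_comm z y]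
  nsmul := nsmulRec
  npow := npowRec

noncomputable instance : LinearOrder X where
  le_refl _ := .inr rfl
  le_trans x y z hxy hyz := by
    obtain hxy | rfl := hxy
    · obtain hyz | rfl := hyz
      · exact .inl (hX.out.lt_trans _ _ _ hxy hyz)
      · exact .inl hxy
    · exact hyz
  le_antisymm x y hxy hyx := by
    obtain hxy | rfl := hxy
    · obtain hyx | rfl := hyx
      · exact (hX.out.lt_irrefl _ (hX.out.lt_trans _ _ _ hxy hyx)).elim
      · rfl
    · rfl
  lt_iff_le_not_ge x y := by
    refine ⟨fun hxy => ⟨.inl hxy, ?_⟩, fun ⟨hxy, hyx⟩ => ?_⟩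
    · rintro (hyx | rfl)
      · exact hX.out.lt_irrefl _ (hX.out.lt_trans _ _ _ hxy hyx)
      · exact hX.out.lt_irrefl _ hxy
    · exact hxy.resolve_right fun h => hyx (.inr h.symm)
  le_total x y := by
    obtain h | h | h := hX.out.lt_total x y
    exacts [.inl (.inl h), .inl (.inr h), .inr (.inl h)]
  toDecidableLE := Classical.decRel _

instance : IsStrictOrderedRing X :=
  have hadd (z x y : X) (h : x < y) : z + x < z + y := by
    simpa only [add_comm z] using hX.out.add_lt_add x y z h
  have hmul (z : X) (hz : 0 < z) (x y : X) (h : x < y) : x * z < y * z :=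
    hX.out.mul_lt_mul x y z h hz
  have : IsOrderedAddMonoid X :=
    { add_le_add_left := fun x y h z => by
        obtain h | rfl := h
        exacts [.inl (hX.out.add_lt_add x y z h), .inr rfl] }
  { le_of_add_le_add_left := fun z x y h => not_lt.mp fun hyx => (hadd z y x hyx).not_ge h
    zero_le_one := .inl hX.out.zero_lt_one
    exists_pair_ne := ⟨0, 1, (show (0 : X) < 1 from hX.out.zero_lt_one).ne⟩
    mul_lt_mul_of_pos_left := fun z hz x y h => by
      simpa only [mul_comm z] using hmul z hz x y h
    mul_lt_mul_of_pos_right := hmul }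

instance : CanonicallyOrderedAdd X where
  exists_add_of_le {x y} h := by
    obtain h | rfl := h
    · obtain ⟨z, hz⟩ := hX.out.sub_exists x y h
      exact ⟨z, hz.symm⟩
    · exact ⟨0, (add_zero x).symm⟩
  le_add_self x y := le_add_of_nonneg_left (hX.out.zero_le y)
  le_self_add x y := le_add_of_nonneg_right (hX.out.zero_le y)

noncomputable instance : SuccAddOrder X where
  toSuccOrder := SuccOrder.ofCore (· + 1)
    (fun {x} _ y => by
      refine ⟨fun h => ?_, (lt_add_one x).trans_le⟩
      obtain ⟨z, rfl⟩ := exists_add_of_le h.le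
      exact add_le_add_right (hX.out.discrete z (pos_of_lt_add_right h)) x)
    fun x hx => (not_isMax x hx).elim
  succ_eq_add_one _ := rfl

end PeanoModel

/-! ### Division, pairs and sequences -/

/-- Division with remainder by positive elements, written as `d + 1`. The redundant bound on the
quotient makes this the universal closure of a Δ₀ formula. -/
def HasDivision (X : Type) [lang.Structure X] : Prop :=
  ∀ a d : X, ∃ q, q < a + 1 ∧ ∃ x, x < d + 1 ∧ a = q * (d + 1) + x

/-- `a` and `d` are β-function data for a sequence that approximates `f` up to length `b`. -/
def BetaApprox {X : Type} [lang.Structure X] (f : X → X → Prop) (a d b : X) : Prop :=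
  ∀ i u v x y, i + 1 < b → BetaC a d i u → BetaC a d (i + 1) v → x ≤ u → f x y → y ≤ v

section Sequences

variable {X : Type} [lang.Structure X]

theorem HasDivision.exists_betaC (hD : HasDivision X) (a d i : X) : ∃ x, BetaC a d i x := by
  obtain ⟨q, -, x, hx, ha⟩ := hD a ((i + 1) * d)
  exact ⟨x, hx, q, ha⟩

variable [Fact (PAm X)]

theorem IsPairC.inj {s x y x' y' : X} (h : IsPairC s x y) (h' : IsPairC s x' y') :
    x = x' ∧ y = y' :=
  pairPoly_inj.mp (h.symm.trans h')

theorem betaC_add_self {a d i x : X} : BetaC a (d + d) i x ↔ BetaC a d (i + i + 1) x := by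
  have hmod : (i + 1) * (d + d) + 1 = (i + i + 1 + 1) * d + 1 := by ring
  unfold BetaC
  rw [hmod]

theorem HasDivision.exists_half (hD : HasDivision X) (u : X) :
    ∃ h, u = h + h ∨ u = h + h + 1 := by
  obtain ⟨q, -, x, hx, rfl⟩ := hD u 1
  refine ⟨q, ?_⟩
  obtain hx | rfl := (Order.lt_add_one_iff.mp hx).lt_or_eq
  · obtain rfl := Order.lt_one_iff.mp hx
    exact .inl (by ring)
  · exact .inr (by ring)

theorem HasDivision.exists_isPairC (hD : HasDivision X) (x y : X) : ∃ s, IsPairC s x y := by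
  unfold IsPairC
  obtain ⟨h, e | e⟩ := hD.exists_half (x + y) <;> rw [e]
  · exact ⟨h * (h + h + 1) + y, by ring⟩
  · exact ⟨(h + h + 1) * (h + 1) + y, by ring⟩

theorem HasDivision.exists_isApprox_iff (hD : HasDivision X) {f : X → X → Prop} {b : X} :
    (∃ s, IsApprox f s b) ↔ ∃ a d, BetaApprox f a d b := by
  constructor
  · rintro ⟨s, hval, hs⟩
    obtain rfl | hb := eq_zero_or_pos b
    · exact ⟨0, 0, fun i _ _ _ _ hi => (not_lt_zero hi).elim⟩
    · obtain ⟨_, a, d, hsad, -⟩ := hval 0 hb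
      exact ⟨a, d, fun i u v x y hi hu hv => hs i u v x y hi ⟨a, d, hsad, hu⟩ ⟨a, d, hsad, hv⟩⟩
  · rintro ⟨a, d, had⟩
    obtain ⟨s, hs⟩ := hD.exists_isPairC a d
    refine ⟨s, fun i _ => ?_, ?_⟩
    · obtain ⟨v, hv⟩ := hD.exists_betaC a d i
      exact ⟨v, a, d, hs, hv⟩
    · rintro i u v x y hi ⟨a₁, d₁, h₁, hu⟩ ⟨a₂, d₂, h₂, hv⟩
      obtain ⟨rfl, rfl⟩ := hs.inj h₁
      obtain ⟨rfl, rfl⟩ := hs.inj h₂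
      exact had i u v x y hi hu hv

end Sequences

namespace Definable

variable {α : Type} {K : StructureClass} {Γ : Polarity} {m : ℕ} {a b d i x y s : UFun α}

theorem isPairC (hs : IsTermFun s) (hx : IsTermFun x) (hy : IsTermFun y) :
    Definable K Γ m fun X _ v => IsPairC (s X v) (x X v) (y X v) :=
  .eq (hs.add hs) (.add (.mul (hx.add hy) (.add (hx.add hy) .one)) (hy.add hy))

theorem betaC (ha : IsTermFun a) (hd : IsTermFun d) (hi : IsTermFun i) (hx : IsTermFun x) :
    Definable K .sigma (m + 1) fun X _ v => BetaC (a X v) (d X v) (i X v) (x X v) :=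
  have hmod : IsTermFun fun X _ v => (i X v + 1) * d X v + 1 :=
    .add (.mul (.add hi .one) hd) .one
  .and (.lt hx hmod) (.ex (.eq ha.weaken (.add (.mul (.var none) hmod.weaken) hx.weaken)))

variable {F : ∀ (X : Type) [lang.Structure X], (α → X) → X → X → Prop}

theorem isPartialFun
    (hF : Definable K .sigma (m + 1) fun X _ (w : Option (Option α) → X) =>
      F X (fun c => w (some (some c))) (w (some none)) (w none)) :
    Definable K .pi (m + 1) fun X _ v => IsPartialFun (F X v) := by
  refine .all (.all (.all (.imp ?_ (.imp ?_ (.eq (.var (some none)) (.var none))))))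
  · exact hF.comp fun c => .var (some c)
  · exact hF.comp (.cons (.var none) (.cons (.var (some (some none)))
      fun c => .var (some (some (some c)))))

theorem betaApprox
    (hF : Definable K .sigma (m + 1) fun X _ (w : Option (Option α) → X) =>
      F X (fun c => w (some (some c))) (w (some none)) (w none))
    (ha : IsTermFun a) (hd : IsTermFun d) (hb : IsTermFun b) :
    Definable K .pi (m + 1) fun X _ v => BetaApprox (F X v) (a X v) (d X v) (b X v) := by
  have ha' := ha.weaken.weaken.weaken.weaken.weaken
  have hd' := hd.weaken.weaken.weaken.weaken.weaken
  have hb' := hb.weaken.weaken.weaken.weaken.weaken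
  let i : Option (Option (Option (Option (Option α)))) := some (some (some (some none)))
  refine .all (.all (.all (.all (.all (.imp ?_ (.imp ?_ (.imp ?_ (.imp ?_ (.imp ?_ ?_)))))))))
  · exact .lt (.add (.var i) .one) hb'
  · exact .betaC ha' hd' (.var i) (.var (some (some (some none))))
  · exact .betaC ha' hd' (.add (.var i) .one) (.var (some (some none)))
  · exact .le (.var (some none)) (.var (some (some (some none))))
  · exact hF.comp (.cons (.var none) (.cons (.var (some none))
      fun c => .var (some (some (some (some (some c)))))))
  · exact .le (.var none) (.var (some (some none)))

end Definable

/-! ### Induction and collection -/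

theorem ISig.induction {M : Type} [lang.Structure M] {n m : ℕ} (hI : ISig n M)
    {K : StructureClass} (hK : K M) {α : Type} [Finite α]
    {P : ∀ (X : Type) [lang.Structure X], (α → X) → X → Prop}
    (hP : Definable K .sigma m fun X _ (w : Option α → X) => P X (fun a => w (some a)) (w none))
    (hm : m ≤ n) {v : α → M} (zero : P M v 0) (succ : ∀ x, P M v x → P M v (x + 1)) (x : M) :
    P M v x := by
  obtain ⟨p, ⟨e⟩⟩ := Finite.exists_equiv_fin α
  obtain ⟨φ, hφ, h⟩ := (hP.le_level hm).comp (α := Fin 1 ⊕ Fin p)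
    (.cons (.var (.inl 0)) fun a => .var (.inr (e a)))
  refine hI {x | P M v x} ⟨p, φ, v ∘ e.symm, levelFm_sigma_iff.mp hφ, fun w => ?_⟩ zero succ x
  rw [← h M hK]
  simp only [Option.elim'_some, Option.elim'_none, Sum.elim_inl, Sum.elim_inr,
    Function.comp_apply, Equiv.symm_apply_apply, Set.mem_ofPred_eq]

theorem ISig.of_succ {M : Type} [lang.Structure M] {k : ℕ} (h : ISig (k + 1) M) : ISig k M := by
  rintro A ⟨p, φ, w, hφ, hA⟩
  exact h A ⟨p, φ, w, levelFm_sigma_iff.mp (levelFm_sigma_iff.mpr hφ).succ, hA⟩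

theorem definable_division : Definable allStructures .sigma 0 (α := Fin 2) fun _ _ v =>
    ∃ q, q < v 0 + 1 ∧ ∃ x, x < v 1 + 1 ∧ v 0 = q * (v 1 + 1) + x :=
  .bex_zero (.add (.var _) .one) (.bex_zero (.add (.var _) .one)
    (.eq (.var _) (.add (.mul (.var _) (.add (.var _) .one)) (.var _))))

theorem ISig.hasDivision {M : Type} [lang.Structure M] [Fact (PAm M)] {k : ℕ}
    (hI : ISig k M) : HasDivision M := by
  intro a d
  refine hI.induction (K := allStructures) trivial (v := ![d])
    (P := fun X _ v a => ∃ q, q < a + 1 ∧ ∃ x, x < v 0 + 1 ∧ a = q * (v 0 + 1) + x)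
    (definable_division.comp (e := fun _ _ w => ![w none, w (some 0)])
      (Fin.forall_fin_two.mpr ⟨.var _, .var _⟩)) k.zero_le ?_ ?_ a
  · exact ⟨0, Order.lt_add_one_iff.mpr zero_le, 0, Order.lt_add_one_iff.mpr zero_le, by ring⟩
  · rintro _ ⟨q, hq, x, hx, rfl⟩
    obtain hx | hx := (Order.lt_add_one_iff.mp hx).lt_or_eq
    · exact ⟨q, hq.trans (lt_add_one _), x + 1, add_lt_add_left hx 1, by ring⟩
    · exact ⟨q + 1, add_lt_add_left hq 1, 0, Order.lt_add_one_iff.mpr zero_le, by rw [hx]; ring⟩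

theorem HasDivision.transfer {M N : Type} [lang.Structure M] [lang.Structure N] {g : M → N}
    {k : ℕ} (hM : HasDivision M) (hel : SigmaElem M N (k + 2) g) : HasDivision N := fun a d =>
  hel.forall definable_division.of_zero (fun v => hM (v 0) (v 1)) ![a, d]

/-- The class of models of PA⁻ + IΣ_n. -/
abbrev iSigModels (n : ℕ) : StructureClass := fun X _ => PAm X ∧ ISig n X

/-- The Σ_m relations over `K` are closed under universal quantification below a term. -/
def BallClosed (K : StructureClass) (m : ℕ) : Prop :=
  ∀ ⦃α : Type⦄ [Finite α] ⦃f : UFun α⦄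
    ⦃P : ∀ (X : Type) [lang.Structure X], (α → X) → X → Prop⦄, IsTermFun f →
      Definable K .sigma m (fun X _ (w : Option α → X) => P X (fun a => w (some a)) (w none)) →
        Definable K .sigma m fun X _ v => ∀ x, x < f X v → P X v x

/-- `R` arises by existential quantification from a Π_m relation over `K` that is monotone in the
quantified variable. -/
def HasMonotoneForm (K : StructureClass) (m : ℕ) {α : Type} (R : URel α) : Prop :=
  ∃ S : ∀ (X : Type) [lang.Structure X], (α → X) → X → Prop,
    Definable K .pi m (fun X _ (w : Option α → X) => S X (fun a => w (some a)) (w none)) ∧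
      ∀ (X : Type) [lang.Structure X], K X → ∀ v : α → X,
        (∀ u u', u ≤ u' → S X v u → S X v u') ∧ (R X v ↔ ∃ u, S X v u)

section BoundedQuantifiers

variable {K : StructureClass} {m n : ℕ} {α : Type} [Finite α]
  {P : ∀ (X : Type) [lang.Structure X], (α → X) → X → Prop}

theorem ballClosed_zero : BallClosed K 0 := fun _ _ _ _ => Definable.ball_zero

theorem BallClosed.bex (hB : BallClosed K m) {f : UFun α} (hf : IsTermFun f)
    (hP : Definable K .pi m fun X _ (w : Option α → X) => P X (fun a => w (some a)) (w none)) :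
    Definable K .pi m fun X _ v => ∃ x, x < f X v ∧ P X v x :=
  (Definable.not (hB (P := fun X _ v x => ¬P X v x) hf (.not hP))).of_iff fun _ _ _ _ => by
    simp only [not_forall, not_not, exists_prop]

theorem Definable.hasMonotoneForm (hB : BallClosed K m)
    (hK : ∀ (X : Type) [lang.Structure X], K X → PAm X) {R : URel α}
    (hR : Definable K .sigma (m + 1) R) : HasMonotoneForm K m R := by
  refine hR.succ_induction (motive := fun R => HasMonotoneForm K m R) ?_ ?_ ?_
  · intro α _ R hR
    exact ⟨fun X _ v _ => R X v, hR.comp fun a => .var (some a),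
      fun X _ _ v => ⟨fun _ _ _ h => h, ⟨fun h => ⟨0, h⟩, fun ⟨_, h⟩ => h⟩⟩⟩
  · rintro α _ P ⟨S, hS, hSP⟩
    refine ⟨fun X _ v u => ∃ x, x < u ∧ S X (x ▹ v) u, hB.bex (.var none) (hS.comp
      (.cons (.var (some none)) (.cons (.var none) fun a => .var (some (some a))))), ?_⟩
    intro X _ hX v
    have : Fact (PAm X) := ⟨hK X hX⟩
    refine ⟨fun u u' h ⟨x, hx, hxu⟩ => ⟨x, hx.trans_le h, (hSP X hX _).1 u u' h hxu⟩, ?_, ?_⟩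
    · rintro ⟨x, hx⟩
      obtain ⟨u, hu⟩ := (hSP X hX (x ▹ v)).2.mp hx
      exact ⟨max (x + 1) u, x, (lt_add_one _).trans_le (le_max_left _ _),
        (hSP X hX _).1 u _ (le_max_right _ _) hu⟩
    · rintro ⟨u, x, -, hu⟩
      exact ⟨x, (hSP X hX (x ▹ v)).2.mpr ⟨u, hu⟩⟩
  · rintro α _ R T ⟨S, hS, hST⟩ hRT
    exact ⟨S, hS, fun X _ hX v => ⟨(hST X hX v).1, (hRT X hX v).trans (hST X hX v).2⟩⟩

variable {M : Type} [lang.Structure M] [Fact (PAm M)] {v : α → M}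

theorem ISig.exists_forall_lt (hI : ISig n M) (hK : K M) (hm : m < n)
    {T : ∀ (X : Type) [lang.Structure X], (α → X) → X → X → Prop}
    (hT : Definable K .pi m fun X _ (w : Option (Option α) → X) =>
      T X (fun a => w (some (some a))) (w (some none)) (w none))
    (mono : ∀ x u u', u ≤ u' → T M v x u → T M v x u') {a : M}
    (h : ∀ x, x < a → ∃ u, T M v x u) : ∃ b, ∀ x, x < a → T M v x b := by
  refine hI.induction hK (v := a ▹ v) (x := a) (m := m + 1)
    (P := fun X _ w y => y ≤ w none → ∃ b, ∀ x, x < y → T X (fun c => w (some c)) x b)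
    (.imp (.le (.var _) (.var _)) (.ex (.ofDual (.ball_pi (.var _) (hT.comp (.cons (.var _)
      (.cons (.var _) fun c => .var (some (some (some (some c)))))))))))
    hm (fun _ => ⟨0, fun x hx => (not_lt_zero hx).elim⟩) ?_ le_rfl
  intro y ih hy
  obtain ⟨b, hb⟩ := ih (le_self_add.trans hy)
  obtain ⟨u, hu⟩ := h y (Order.add_one_le_iff.mp hy)
  refine ⟨max b u, fun x hx => ?_⟩
  obtain hx | rfl := (Order.lt_add_one_iff.mp hx).lt_or_eq
  · exact mono x b _ (le_max_left _ _) (hb x hx)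
  · exact mono x u _ (le_max_right _ _) hu

theorem ISig.exists_least (hI : ISig m M) (hK : K M) (hB : BallClosed K m)
    (hP : Definable K .pi m fun X _ (w : Option α → X) => P X (fun a => w (some a)) (w none))
    (h : ∃ x, P M v x) : ∃ x, P M v x ∧ ∀ y, y < x → ¬P M v y := by
  by_contra! hleast
  have hnot : ∀ x y, y < x → ¬P M v y := by
    refine hI.induction hK (P := fun X _ v x => ∀ y, y < x → ¬P X v y)
      (hB (.var none) (.not (hP.comp (.cons (.var none) fun a => .var (some (some a))))))
      le_rfl (fun y hy => (not_lt_zero hy).elim) fun x ih y hy hPy => ?_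
    obtain ⟨z, hz, hPz⟩ := hleast y hPy
    exact ih z (hz.trans_le (Order.lt_add_one_iff.mp hy)) hPz
  obtain ⟨x, hx⟩ := h
  exact hnot (x + 1) x (lt_add_one _) hx

end BoundedQuantifiers

theorem ballClosed_iSigModels {m n : ℕ} (hm : m ≤ n) : BallClosed (iSigModels n) m := by
  induction m with
  | zero => exact ballClosed_zero
  | succ m ih =>
    intro α _ f P hf hP
    obtain ⟨S, hS, hSP⟩ := hP.hasMonotoneForm (ih (Nat.le_of_succ_le hm)) fun _ _ h => h.1
    have hS' : Definable (iSigModels n) .pi m fun X _ (w : Option (Option α) → X) =>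
        S X (w (some none) ▹ fun a => w (some (some a))) (w none) :=
      hS.comp (.cons (.var none) (.cons (.var (some none)) fun a => .var (some (some a))))
    refine (Definable.ex (P := fun X _ v b => ∀ x, x < f X v → S X (x ▹ v) b)
      (.ofDual (.ball_pi hf.weaken (hS'.comp (.cons (.var (some none))
        (.cons (.var none) fun a => .var (some (some a)))))))).of_iff fun X _ hX v => ?_
    have : Fact (PAm X) := ⟨hX.1⟩
    refine ⟨fun h => ?_, fun ⟨b, hb⟩ x hx => (hSP X hX (x ▹ v)).2.mpr ⟨b, hb x hx⟩⟩
    exact hX.2.exists_forall_lt hX hm (T := fun X _ v x u => S X (x ▹ v) u) hS'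
      (fun x => (hSP X hX (x ▹ v)).1) fun x hx => (hSP X hX (x ▹ v)).2.mp (h x hx)

/-- `U` holds of at most one element; if `R` holds of some element, then `U` holds of one that
exceeds a witness of `R`. Selecting a bound instead of a witness keeps `U` of the complexity
of `R`. -/
structure IsWitnessBound {X : Type} [lang.Structure X] (U R : X → Prop) : Prop where
  unique : ∀ w w', U w → U w' → w = w'
  exists_bound : ∀ y, R y → ∃ w, U w
  exists_lt : ∀ w, U w → ∃ y, y < w ∧ R y

theorem Definable.exists_isWitnessBound {k : ℕ} {α : Type} [Finite α]
    {R : ∀ (X : Type) [lang.Structure X], (α → X) → X → Prop}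
    (hR : Definable (iSigModels k) .sigma (k + 1) fun X _ (w : Option α → X) =>
      R X (fun a => w (some a)) (w none)) :
    ∃ U : URel (Option α), Definable allStructures .sigma (k + 1) U ∧
      ∀ (X : Type) [lang.Structure X], iSigModels k X → ∀ v,
        IsWitnessBound (fun w => U X (w ▹ v)) (R X v) := by
  have hB := ballClosed_iSigModels (le_refl k)
  obtain ⟨S, hS, hSR⟩ := hR.hasMonotoneForm hB fun _ _ h => h.1
  let Θ : ∀ (X : Type) [lang.Structure X], (α → X) → X → Prop :=
    fun X _ v w => ∃ y, y < w ∧ S X (y ▹ v) w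
  have hΘ : Definable (iSigModels k) .pi k fun X _ (w : Option α → X) =>
      Θ X (fun a => w (some a)) (w none) :=
    hB.bex (.var none) (hS.comp
      (.cons (.var (some none)) (.cons (.var none) fun a => .var (some (some a)))))
  have hleast : Definable (iSigModels k) .sigma (k + 1) fun X _ (w : Option α → X) =>
      Θ X (fun a => w (some a)) (w none) ∧ ∀ w', w' < w none → ¬Θ X (fun a => w (some a)) w' :=
    .and hΘ.ofDual (hB (.var none)
      (.not (hΘ.comp (.cons (.var none) fun a => .var (some (some a)))))).succ
  obtain ⟨U, hU, hUΘ⟩ := hleast.exists_allStructures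
  refine ⟨U, hU, fun X _ hX v => ?_⟩
  have : Fact (PAm X) := ⟨hX.1⟩
  have hUv w : U X (w ▹ v) ↔ Θ X v w ∧ ∀ w', w' < w → ¬Θ X v w' := (hUΘ X hX (w ▹ v)).symm
  simp only [hUv]
  constructor
  · intro w w' hw hw'
    exact le_antisymm (not_lt.mp fun h => hw.2 w' h hw'.1) (not_lt.mp fun h => hw'.2 w h hw.1)
  · intro y hy
    obtain ⟨u, hu⟩ := (hSR X hX (y ▹ v)).2.mp hy
    exact hX.2.exists_least hX hB hΘ ⟨max (y + 1) u,
      y, (lt_add_one _).trans_le (le_max_left _ _),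
      (hSR X hX _).1 u _ (le_max_right _ _) hu⟩
  · rintro w ⟨⟨y, hy, hyw⟩, -⟩
    exact ⟨y, hy, (hSR X hX (y ▹ v)).2.mpr ⟨w, hyw⟩⟩

/-! ### Definable relations with one parameter -/

theorem Definable.sigmaDef2 {α : Type} [Finite α] {K : StructureClass} {m : ℕ}
    {F : ∀ (X : Type) [lang.Structure X], (α → X) → X → X → Prop}
    (hF : Definable K .sigma m fun X _ (w : Option (Option α) → X) =>
      F X (fun a => w (some (some a))) (w (some none)) (w none))
    {M : Type} [lang.Structure M] (hK : K M) (v : α → M) : SigmaDef2 m M (F M v) := by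
  obtain ⟨p, ⟨e⟩⟩ := Finite.exists_equiv_fin α
  obtain ⟨φ, hφ, h⟩ := hF.comp (α := Fin 2 ⊕ Fin p)
    (.cons (.var (.inl 1)) (.cons (.var (.inl 0)) fun a => .var (.inr (e a))))
  refine ⟨p, φ, v ∘ e.symm, levelFm_sigma_iff.mp hφ, fun w => ?_⟩
  rw [← h M hK]
  simp only [Option.elim'_some, Option.elim'_none, Sum.elim_inl, Sum.elim_inr,
    Function.comp_apply, Equiv.symm_apply_apply]

theorem Definable.exists_one_param {α β : Type} [Finite β] {K : StructureClass} {m : ℕ}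
    {R : URel (α ⊕ β)} (hR : Definable K .sigma (m + 1) R) {M : Type} [lang.Structure M]
    [Fact (PAm M)] (hD : HasDivision M) (p : β → M) :
    ∃ S : URel (Option α), Definable K .sigma (m + 1) S ∧
      ∃ e : M, ∀ v, R M (Sum.elim v p) ↔ S M (e ▹ v) := by
  induction β using Finite.induction_empty_option generalizing α with
  | of_equiv i ih =>
    obtain ⟨S, hS, e, he⟩ := ih (hR.comp (e := fun X _ w => w ∘ Sum.map id i.symm)
      fun c => .var _) (p ∘ i)
    refine ⟨S, hS, e, fun v => ?_⟩
    rw [← he, Sum.elim_comp_map, Function.comp_assoc, i.self_comp_symm]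
    rfl
  | h_empty =>
    refine ⟨fun X _ w => R X (Sum.elim (fun a => w (some a)) PEmpty.elim),
      hR.comp (by rintro (a | ⟨⟨⟩⟩); exact .var _), 0, fun v => ?_⟩
    rw [Subsingleton.elim p PEmpty.elim]
    rfl
  | h_option ih =>
    obtain ⟨S, hS, e, he⟩ := ih (α := Option α)
      (R := fun X _ w => R X (Sum.elim (fun a => w (.inl (some a)))
        (w (.inl none) ▹ fun b => w (.inr b))))
      (hR.comp (by rintro (a | _ | b) <;> exact .var _)) (p ∘ some)
    obtain ⟨s, hs⟩ := hD.exists_isPairC e (p none)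
    refine ⟨fun X _ w => ∃ x y, IsPairC (w none) x y ∧ S X (x ▹ y ▹ fun a => w (some a)),
      .ex (.ex (.and (.isPairC (.var _) (.var _) (.var _)) (hS.comp (.cons (.var _)
        (.cons (.var _) fun a => .var (some (some (some a)))))))), s, fun v => ?_⟩
    have key := he (p none ▹ v)
    simp only [Sum.elim_inl, Sum.elim_inr, Option.elim'_none, Option.elim'_some,
      Option.elim'_none_some] at key
    refine key.trans ⟨fun h => ⟨e, p none, hs, h⟩, ?_⟩
    rintro ⟨x, y, hxy, h⟩
    obtain ⟨rfl, rfl⟩ := hs.inj hxy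
    exact h

theorem SigmaDef2.exists_definable {m : ℕ} {M : Type} [lang.Structure M] [Fact (PAm M)]
    (hD : HasDivision M) {f : M → M → Prop} (hf : SigmaDef2 (m + 1) M f) :
    ∃ F : ∀ (X : Type) [lang.Structure X], (Unit → X) → X → X → Prop,
      (Definable allStructures .sigma (m + 1) fun X _ (w : Option (Option Unit) → X) =>
        F X (fun c => w (some (some c))) (w (some none)) (w none)) ∧
      ∃ e, f = F M e := by
  obtain ⟨p, φ, w, hφ, hf⟩ := hf
  obtain ⟨S, hS, e, he⟩ := Definable.exists_one_param (K := allStructures)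
    (R := fun X _ v => φ.Realize v finZeroElim)
    ⟨φ, levelFm_sigma_iff.mpr hφ, fun _ _ _ _ => Iff.rfl⟩ hD w
  refine ⟨fun X _ e x y => S X (e () ▹ ![x, y]), hS.comp (.cons (.var _)
    (Fin.forall_fin_two.mpr ⟨.var _, .var _⟩)), fun _ => e, ?_⟩
  funext x y
  exact propext ((hf ![x, y]).trans (he ![x, y]))

/-! ### Transfer of approximations -/

section Approximations

theorem PSig.of_sigmaElem {M N : Type} [lang.Structure M] [lang.Structure N] {g : M → N} {k : ℕ}
    [Fact (PAm M)] [Fact (PAm N)] (hM : HasDivision M) (hN : HasDivision N)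
    (hel : SigmaElem M N (k + 2) g) (h : PSig (k + 1) N) : PSig (k + 1) M := by
  intro f hf hfun b
  obtain ⟨F, hF, e, rfl⟩ := hf.exists_definable hM
  have hfunN : IsPartialFun (F N (g ∘ e)) := (hel.iff hF.isPartialFun.succ e).mp hfun
  have happrox := hN.exists_isApprox_iff.mp
    (h (F N (g ∘ e)) (hF.sigmaDef2 trivial _) hfunN (g b))
  have hdef : Definable allStructures .sigma (k + 2) fun X _ (w : Option Unit → X) =>
      ∃ a d, BetaApprox (F X fun c => w (some c)) a d (w none) :=
    .ex (.ex (.ofDual (.betaApprox (F := fun X _ w => F X fun c => w (some (some (some c))))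
      (hF.comp (.cons (.var _) (.cons (.var _) fun c => .var _)))
      (.var _) (.var _) (.var _))))
  exact hM.exists_isApprox_iff.mpr ((hel.iff hdef (b ▹ e)).mpr happrox)

/-- One step of a parametrized function `f` with parameters at most `c`, split into two steps of a
single partial function. An even argument `h + h` is sent to a bound on the codes of the pairs
`(x, p)` with `x ≤ h + h + 1` and `p ≤ c`; the odd argument coding `(x, p)` is sent to the value at
`x` of `f` with parameter `p`. -/
inductive SplitStep {X : Type} [Add X] [Mul X] [One X] (f : X → X → X → Prop) (c : X) :
    X → X → Prop
  | bound (h : X) :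
      SplitStep f c (h + h) (pairPoly (h + h + 1) c + pairPoly (h + h + 1) c + 1)
  | value {p x y : X} : f p x y → SplitStep f c (pairPoly x p + pairPoly x p + 1) y

theorem splitStep_iff {X : Type} [lang.Structure X] {f : X → X → X → Prop} {c u z : X} :
    SplitStep f c u z ↔
      (∃ h, u = h + h ∧ z = pairPoly (h + h + 1) c + pairPoly (h + h + 1) c + 1) ∨
        ∃ x p, u = pairPoly x p + pairPoly x p + 1 ∧ f p x z := by
  constructor
  · rintro (h | hf)
    · exact .inl ⟨h, rfl, rfl⟩
    · exact .inr ⟨_, _, rfl, hf⟩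
  · rintro (⟨h, rfl, rfl⟩ | ⟨x, p, rfl, hf⟩)
    · exact .bound h
    · exact .value hf

theorem SplitStep.isPartialFun {X : Type} [lang.Structure X] [Fact (PAm X)]
    {f : X → X → X → Prop} (hf : ∀ p, IsPartialFun (f p)) (c : X) :
    IsPartialFun (SplitStep f c) := by
  intro u z z' hz hz'
  rw [splitStep_iff] at hz hz'
  rcases hz with ⟨h, rfl, rfl⟩ | ⟨x, p, rfl, hz⟩ <;>
    rcases hz' with ⟨h', hh, rfl⟩ | ⟨x', p', hh, hz'⟩
  · obtain rfl := add_self_injective hh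
    rfl
  · exact (add_self_ne_add_self_add_one _ _ hh).elim
  · exact (add_self_ne_add_self_add_one _ _ hh.symm).elim
  · obtain ⟨rfl, rfl⟩ := pairPoly_inj.mp (add_self_injective (add_right_cancel hh))
    exact hf p x z z' hz hz'

theorem IsTermFun.pairPoly {α : Type} {f f' : UFun α} (hf : IsTermFun f) (hf' : IsTermFun f') :
    IsTermFun fun X _ v => pairPoly (f X v) (f' X v) :=
  .add (.mul (.add hf hf') (.add (.add hf hf') .one)) (.add hf' hf')

theorem Definable.splitStep {m : ℕ} {K : StructureClass}
    {F : ∀ (X : Type) [lang.Structure X], (Unit → X) → X → X → Prop}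
    (hF : Definable K .sigma (m + 1) fun X _ (w : Option (Option Unit) → X) =>
      F X (fun c => w (some (some c))) (w (some none)) (w none)) :
    Definable K .sigma (m + 1) fun X _ (w : Option (Option Unit) → X) =>
      SplitStep (fun p => F X fun _ => p) (w (some (some ()))) (w (some none)) (w none) := by
  refine .of_iff (.or (.ex (.and (.eq (.var _) (.add (.var _) (.var _)))
    (.eq (.var _) (.add (.add ?_ ?_) .one))))
    (.ex (.ex (.and (.eq (.var _) (.add (.add ?_ ?_) .one)) ?_)))) fun X _ _ v => splitStep_iff
  · exact .pairPoly (.add (.add (.var _) (.var _)) .one) (.var _)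
  · exact .pairPoly (.add (.add (.var _) (.var _)) .one) (.var _)
  · exact .pairPoly (.var _) (.var _)
  · exact .pairPoly (.var _) (.var _)
  · exact hF.comp (.cons (.var (some (some none))) (.cons (.var (some none)) fun _ => .var none))

theorem BetaApprox.of_splitStep {X : Type} [lang.Structure X] [Fact (PAm X)]
    (hD : HasDivision X) {f : X → X → X → Prop} {c a d b : X}
    (h : BetaApprox (SplitStep f c) a d (b + b)) {p : X} (hp : p ≤ c) :
    BetaApprox (f p) a (d + d) b := by
  intro i u v x y hi hu hv hx hf
  rw [betaC_add_self] at hu hv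
  obtain ⟨z, hz⟩ := hD.exists_betaC a d (i + i + 1 + 1)
  have hlt : i + i + 1 + 1 + 1 < b + b :=
    calc i + i + 1 + 1 + 1 < i + i + 1 + 1 + 1 + 1 := lt_add_one _
      _ = (i + 1 + 1) + (i + 1 + 1) := by ring
      _ ≤ b + b := add_le_add (Order.add_one_le_of_lt hi) (Order.add_one_le_of_lt hi)
  have hcode : pairPoly x p + pairPoly x p + 1 ≤ z := by
    obtain ⟨r, hr⟩ := hD.exists_half u
    have hru : r + r ≤ u ∧ u ≤ r + r + 1 := by
      rcases hr with rfl | rfl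
      exacts [⟨le_rfl, le_self_add⟩, ⟨le_self_add, le_rfl⟩]
    have hbound := h _ u z _ _ ((lt_add_one _).trans hlt) hu hz hru.1 (.bound r)
    have hpair := pairPoly_le_pairPoly (hx.trans hru.2) hp
    exact (add_le_add_left (add_le_add hpair hpair) 1).trans hbound
  have hindex : i + 1 + (i + 1) + 1 = i + i + 1 + 1 + 1 := by ring
  exact h _ z v _ _ hlt hz (hindex ▸ hv) hcode (.value hf)

theorem PSig.exists_forall_betaApprox {M : Type} [lang.Structure M] [Fact (PAm M)] {k : ℕ}
    (h : PSig (k + 1) M) (hD : HasDivision M)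
    {F : ∀ (X : Type) [lang.Structure X], (Unit → X) → X → X → Prop} {K : StructureClass}
    (hF : Definable K .sigma (k + 1) fun X _ (w : Option (Option Unit) → X) =>
      F X (fun c => w (some (some c))) (w (some none)) (w none)) (hK : K M)
    (hfun : ∀ e, IsPartialFun (F M e)) (b c : M) :
    ∃ a d, ∀ p, p ≤ c → BetaApprox (F M fun _ => p) a d b := by
  obtain ⟨a, d, had⟩ := hD.exists_isApprox_iff.mp (h _ (hF.splitStep.sigmaDef2
    (F := fun X _ w => SplitStep (fun p => F X fun _ => p) (w ())) hK fun _ => c)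
    (SplitStep.isPartialFun (fun p => hfun fun _ => p) c) (b + b))
  exact ⟨a, d + d, fun p hp => had.of_splitStep hD hp⟩

theorem IsWitnessBound.transfer {M N : Type} [lang.Structure M] [lang.Structure N] {g : M → N}
    {k : ℕ} {α : Type} [Finite α]
    {U R : ∀ (X : Type) [lang.Structure X], (α → X) → X → Prop}
    (hU : Definable allStructures .sigma (k + 1) fun X _ (w : Option α → X) =>
      U X (fun a => w (some a)) (w none))
    (hR : Definable allStructures .sigma (k + 1) fun X _ (w : Option α → X) =>
      R X (fun a => w (some a)) (w none))
    (hel : SigmaElem M N (k + 2) g) (h : ∀ v, IsWitnessBound (U M v) (R M v)) (v : α → N) :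
    IsWitnessBound (U N v) (R N v) where
  unique w w' := hel.forall (R := fun X _ (w : Option (Option α) → X) =>
      U X (fun a => w (some (some a))) (w (some none)) → U X (fun a => w (some (some a))) (w none) →
        w (some none) = w none)
    (.imp (hU.comp (.cons (.var _) fun _ => .var _)).succ
      (.imp (hU.comp (.cons (.var _) fun _ => .var _)).succ (.eq (.var _) (.var _))))
    (fun _ => (h _).unique _ _) (w' ▹ w ▹ v)
  exists_bound y := hel.forall (R := fun X _ (w : Option α → X) =>
      R X (fun a => w (some a)) (w none) → ∃ x, U X (fun a => w (some a)) x)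
    (.imp hR.succ (.ofDual (.ex (hU.comp (.cons (.var _) fun _ => .var _)))))
    (fun _ => (h _).exists_bound _) (y ▹ v)
  exists_lt w := hel.forall (R := fun X _ (w : Option α → X) =>
      U X (fun a => w (some a)) (w none) →
        ∃ y, y < w none ∧ R X (fun a => w (some a)) y)
    (.imp hU.succ (.ofDual (.ex (.and (.lt (.var _) (.var _))
      (hR.comp (.cons (.var _) fun _ => .var _))))))
    (fun _ => (h _).exists_lt _) (w ▹ v)

theorem BetaApprox.of_isWitnessBound {X : Type} [lang.Structure X] [Fact (PAm X)]
    {f u : X → X → Prop} {a d b b' : X} (h : BetaApprox u a d b') (hb : b ≤ b')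
    (hf : IsPartialFun f) (hu : ∀ x, IsWitnessBound (u x) (f x)) : BetaApprox f a d b := by
  intro i r s x y hi hr hs hx hxy
  obtain ⟨w, hw⟩ := (hu x).exists_bound y hxy
  obtain ⟨y', hy', hxy'⟩ := (hu x).exists_lt w hw
  obtain rfl := hf x y y' hxy hxy'
  exact hy'.le.trans (h i r s x w (hi.trans_le hb) hr hs hx hw)

theorem PSig.exists_betaApprox_of_cofinal {M N : Type} [lang.Structure M] [lang.Structure N]
    {g : M → N} {k : ℕ} [Fact (PAm M)] (h : PSig (k + 1) M) (hM : HasDivision M)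
    (hel : SigmaElem M N (k + 2) g) (hcf : Cofinal M N g)
    {F : ∀ (X : Type) [lang.Structure X], (Unit → X) → X → X → Prop}
    (hF : Definable allStructures .sigma (k + 1) fun X _ (w : Option (Option Unit) → X) =>
      F X (fun c => w (some (some c))) (w (some none)) (w none))
    (hfun : ∀ e, IsPartialFun (F M e)) (e : Unit → N) (b : N) :
    ∃ a d b', b ≤ b' ∧ BetaApprox (F N e) a d b' := by
  obtain ⟨b', hb⟩ := hcf b
  obtain ⟨c, hc⟩ := hcf (e ())
  obtain ⟨a, d, had⟩ := h.exists_forall_betaApprox hM hF trivial hfun b' c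
  have hdef : Definable allStructures .pi (k + 1) fun X _ (v : Fin 4 → X) =>
      ∀ p, p ≤ v 3 → BetaApprox (F X fun _ => p) (v 0) (v 1) (v 2) :=
    .all (.imp (.le (.var _) (.var _)) (.betaApprox (F := fun X _ w => F X fun _ => w none)
      (hF.comp (.cons (.var _) (.cons (.var _) fun _ => .var _)))
      (.var _) (.var _) (.var _)))
  exact ⟨g a, g d, g b', hb, (hel.iff hdef.succ ![a, d, b', c]).mp had (e ()) hc⟩

theorem PSig.of_cofinal {M N : Type} [lang.Structure M] [lang.Structure N] {g : M → N} {k : ℕ}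
    [Fact (PAm M)] [Fact (PAm N)] (hI : ISig k M) (hM : HasDivision M) (hN : HasDivision N)
    (hel : SigmaElem M N (k + 2) g) (hcf : Cofinal M N g) (h : PSig (k + 1) M) :
    PSig (k + 1) N := by
  intro f hf hfun b
  obtain ⟨F, hF, e, rfl⟩ := hf.exists_definable hN
  let R : ∀ (X : Type) [lang.Structure X], (Option Unit → X) → X → Prop :=
    fun X _ w y => F X (fun c => w (some c)) (w none) y
  obtain ⟨U, hU, hUR⟩ := Definable.exists_isWitnessBound (k := k) (R := R)
    (hF.mono_class fun _ _ _ => trivial)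
  have hUM : ∀ w, IsWitnessBound (fun x => U M (x ▹ w)) (R M w) := hUR M ⟨Fact.out, hI⟩
  have hUN : ∀ w, IsWitnessBound (fun x => U N (x ▹ w)) (R N w) :=
    IsWitnessBound.transfer (U := fun X _ w x => U X (x ▹ w))
      (hU.comp (.cons (.var _) fun _ => .var _)) hF hel hUM
  obtain ⟨a, d, b', hb, had⟩ := h.exists_betaApprox_of_cofinal hM hel hcf
    (F := fun X _ p x w => U X (w ▹ x ▹ p))
    (hU.comp (.cons (.var _) (.cons (.var _) fun _ => .var _)))
    (fun p x w w' => (hUM (x ▹ p)).unique w w') e b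
  exact hN.exists_isApprox_iff.mpr
    ⟨a, d, had.of_isWitnessBound hb hfun fun x => hUN (x ▹ e)⟩

end Approximations

theorem statement_19_general (k : ℕ) (M N : Type) [lang.Structure M] [lang.Structure N]
    (hPA : PAm M) (hI : ISig k M) (g : M → N) (hel : SigmaElem M N (k + 2) g)
    (hcf : Cofinal M N g) : PSig (k + 1) M ↔ PSig (k + 1) N := by
  have : Fact (PAm M) := ⟨hPA⟩
  have : Fact (PAm N) := ⟨hPA.transfer hel⟩
  have hM : HasDivision M := hI.hasDivision
  have hN : HasDivision N := hM.transfer hel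
  exact ⟨.of_cofinal hI hM hN hel hcf, .of_sigmaElem hM hN hel⟩

/-- For `n ≥ 1`, if `M ⊨ PA⁻ + IΣn` and `N` is a Σ_{n+1}-elementary
cofinal extension of `M`, then `M ⊨ PΣn` iff `N ⊨ PΣn`. -/
theorem statement_19 (n : ℕ) (hn : 1 ≤ n) (M N : Type)
    [lang.Structure M] [lang.Structure N]
    (hPA : PAm M) (hI : ISig n M)
    (g : M → N) (hel : SigmaElem M N (n + 1) g) (hcf : Cofinal M N g) :
    PSig n M ↔ PSig n N := by
  obtain ⟨k, rfl⟩ := Nat.exists_eq_add_of_le' hn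
  exact statement_19_general k M N hPA hI.of_succ g hel hcf

end ArithFC
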